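/- arXiv:1512.00079 — 3 statements merged into one kernel-verified Lean document; each statement's English description precedes it below -/
import Mathlib

section
/- Let n ≥ 2 and let φ be an endomorphism of Houghton's group H_n with nontrivial kernel. Then: (i) φ(FSym_n) ⊆ FSym_n and FAlt_n ⊆ ker φ; (ii) writing φ' for the induced endomorphism of FSym_n/FAlt_n and φ̄ for the induced endomorphism of H_n/FSym_n (a finitely generated free abelian group of rank n−1), if φ' is nontrivial and φ̄ is eventually trivial then GR(φ) = 1, and otherwise GR(φ) = GR(φ̄). -/
/-! ## Houghton's groups: basic setup -/

/-- The underlying set of Houghton's group: `n` rays of discrete points;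
`(i, p)` is the point at position `p` on the ray `R_i`. -/
abbrev XH (n : ℕ) : Type := Fin n × ℕ

/-- `g` acts, outside a finite set, as the translation by `m i` on the ray `R_i`. -/
def HasTranslationVector {n : ℕ} (g : Equiv.Perm (XH n)) (m : Fin n → ℤ) : Prop :=
  ∃ K : Finset (XH n), ∀ x : XH n, x ∉ K →
    (g x).1 = x.1 ∧ ((g x).2 : ℤ) = (x.2 : ℤ) + m x.1

/-- An eventual translation of `X_n`. -/
def IsEventualTranslation {n : ℕ} (g : Equiv.Perm (XH n)) : Prop :=
  ∃ m : Fin n → ℤ, HasTranslationVector g m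

/-- Houghton's group `H_n`: the group of all eventual translations of `X_n`. -/
def Houghton (n : ℕ) : Subgroup (Equiv.Perm (XH n)) where
  carrier := {g | IsEventualTranslation g}
  one_mem' := ⟨0, ∅, fun x _ => by simp⟩
  mul_mem' := by
    rintro a b ⟨ma, Ka, hKa⟩ ⟨mb, Kb, hKb⟩
    classical
    refine ⟨ma + mb, Kb ∪ Kb.image b ∪ Ka.image b.symm, fun x hx => ?_⟩
    simp only [Finset.mem_union, not_or] at hx
    have hxb : x ∉ Kb := hx.1.1
    have hbx : b x ∉ Ka := by
      intro hc
      exact hx.2 (Finset.mem_image.mpr ⟨b x, hc, b.symm_apply_apply x⟩)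
    obtain ⟨hb1, hb2⟩ := hKb x hxb
    obtain ⟨ha1, ha2⟩ := hKa (b x) hbx
    refine ⟨?_, ?_⟩
    · show (a (b x)).1 = x.1
      rw [ha1, hb1]
    · show ((a (b x)).2 : ℤ) = (x.2 : ℤ) + (ma + mb) x.1
      rw [ha2, hb1, hb2, Pi.add_apply]
      ring
  inv_mem' := by
    rintro a ⟨m, K, hK⟩
    classical
    refine ⟨-m, K.image a, fun x hx => ?_⟩
    have hy : a⁻¹ x ∉ K := by
      intro hc
      exact hx (Finset.mem_image.mpr ⟨a⁻¹ x, hc, a.apply_symm_apply x⟩)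
    obtain ⟨e1, e2⟩ := hK _ hy
    rw [show a (a⁻¹ x) = x from a.apply_symm_apply x] at e1 e2
    refine ⟨e1.symm, ?_⟩
    rw [← e1] at e2
    rw [Pi.neg_apply]
    omega

/-- The subgroup of finitely supported permutations of `X_n`. -/
def FSymSub (n : ℕ) : Subgroup (Equiv.Perm (XH n)) where
  carrier := {g | {x | g x ≠ x}.Finite}
  one_mem' := by simp
  mul_mem' := by
    intro a b ha hb
    apply Set.Finite.subset (ha.union hb)
    intro x hx
    by_cases h : b x = x
    · left
      show a x ≠ x
      simpa [Equiv.Perm.mul_apply, h] using hx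
    · right; exact h
  inv_mem' := by
    intro a ha
    apply Set.Finite.subset ha
    intro x hx
    show a x ≠ x
    intro hc
    apply hx
    show a⁻¹ x = x
    conv_lhs => rw [← hc]
    exact a.symm_apply_apply x

/-- The subgroup of finitely supported even permutations of `X_n`:
products of an even number of transpositions. -/
def FAltSub (n : ℕ) : Subgroup (Equiv.Perm (XH n)) where
  carrier := {g | ∃ l : List (Equiv.Perm (XH n)),
    (∀ τ ∈ l, τ.IsSwap) ∧ Even l.length ∧ l.prod = g}
  one_mem' := ⟨[], by simp, by simp, by simp⟩
  mul_mem' := by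
    rintro a b ⟨la, hla, hea, rfl⟩ ⟨lb, hlb, heb, rfl⟩
    refine ⟨la ++ lb, ?_, ?_, List.prod_append⟩
    · intro τ hτ
      rcases List.mem_append.mp hτ with h | h
      exacts [hla τ h, hlb τ h]
    · simpa using hea.add heb
  inv_mem' := by
    rintro a ⟨l, hl, he, rfl⟩
    refine ⟨(l.map fun x => x⁻¹).reverse, ?_, by simpa using he,
      (List.prod_inv_reverse l).symm⟩
    intro τ hτ
    rw [List.mem_reverse, List.mem_map] at hτ
    obtain ⟨σ, hσ, rfl⟩ := hτ
    obtain ⟨x, y, hxy, rfl⟩ := hl σ hσ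
    exact ⟨x, y, hxy, by rw [Equiv.swap_inv]⟩

/-- `FSym_n` and `FAlt_n` viewed as subgroups of `H_n`. -/
def FSymIn (n : ℕ) : Subgroup (Houghton n) := (FSymSub n).comap (Houghton n).subtype

def FAltIn (n : ℕ) : Subgroup (Houghton n) := (FAltSub n).comap (Houghton n).subtype

/-- The index of the first ray `R_1`. -/
def ray0 (n : ℕ) (hn : 0 < n) : Fin n := ⟨0, hn⟩

/-- The underlying function of the generator `g_i`. -/
def gFun (n : ℕ) (hn : 0 < n) (i : Fin n) : XH n → XH n := fun x =>
  if x.1 = ray0 n hn then (if x.2 = 0 then (i, 0) else (ray0 n hn, x.2 - 1))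
  else if x.1 = i then (i, x.2 + 1) else x

/-- The inverse of `gFun`. -/
def gInvFun (n : ℕ) (hn : 0 < n) (i : Fin n) : XH n → XH n := fun x =>
  if x.1 = i then (if x.2 = 0 then (ray0 n hn, 0) else (i, x.2 - 1))
  else if x.1 = ray0 n hn then (ray0 n hn, x.2 + 1) else x

/-- The generator `g_i` of `H_n` (as a permutation): it translates the first ray
down by one, sends `(1,1)` to `(i,1)` and translates the ray `R_i` up by one. -/
def gGen (n : ℕ) (hn : 0 < n) (i : Fin n) (hi : i ≠ ray0 n hn) : Equiv.Perm (XH n) where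
  toFun := gFun n hn i
  invFun := gInvFun n hn i
  left_inv := by
    rintro ⟨j, p⟩
    show gInvFun n hn i (gFun n hn i (j, p)) = (j, p)
    simp only [gFun, gInvFun]
    split_ifs <;> simp_all [Prod.ext_iff] <;> omega
  right_inv := by
    rintro ⟨j, p⟩
    show gFun n hn i (gInvFun n hn i (j, p)) = (j, p)
    simp only [gFun, gInvFun]
    split_ifs <;> simp_all [Prod.ext_iff] <;> omega

/-- The translation vector of `g_i`. -/
def gVec (n : ℕ) (hn : 0 < n) (i : Fin n) : Fin n → ℤ :=
  fun j => if j = ray0 n hn then -1 else if j = i then 1 else 0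

theorem gGen_mem (n : ℕ) (hn : 0 < n) (i : Fin n) (hi : i ≠ ray0 n hn) :
    gGen n hn i hi ∈ Houghton n := by
  refine ⟨gVec n hn i, {(ray0 n hn, 0)}, ?_⟩
  rintro ⟨j, p⟩ hx
  rw [Finset.mem_singleton] at hx
  have hx' : j ≠ ray0 n hn ∨ p ≠ 0 := by
    by_contra h
    push_neg at h
    exact hx (by rw [h.1, h.2])
  show (gFun n hn i (j, p)).1 = j ∧ ((gFun n hn i (j, p)).2 : ℤ) = (p : ℤ) + gVec n hn i j
  simp only [gFun, gVec]
  split_ifs <;> simp_all [Prod.ext_iff] <;> omega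

/-- The generator `g_i` as an element of `H_n`. -/
def hGen (n : ℕ) (hn : 0 < n) (i : Fin n) (hi : i ≠ ray0 n hn) : Houghton n :=
  ⟨gGen n hn i hi, gGen_mem n hn i hi⟩

/-- The transposition `α` exchanging `(1,1)` and `(1,2)`. -/
def alphaPerm (n : ℕ) (hn : 0 < n) : Equiv.Perm (XH n) :=
  Equiv.swap (ray0 n hn, 0) (ray0 n hn, 1)

theorem alphaPerm_mem (n : ℕ) (hn : 0 < n) : alphaPerm n hn ∈ Houghton n := by
  refine ⟨0, {(ray0 n hn, 0), (ray0 n hn, 1)}, ?_⟩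
  intro x hx
  simp only [Finset.mem_insert, Finset.mem_singleton, not_or] at hx
  rw [show alphaPerm n hn x = x from Equiv.swap_apply_of_ne_of_ne hx.1 hx.2]
  simp

/-- `α` as an element of `H_n`. -/
def hAlpha (n : ℕ) (hn : 0 < n) : Houghton n := ⟨alphaPerm n hn, alphaPerm_mem n hn⟩

theorem alphaPerm_mem_FSym (n : ℕ) (hn : 0 < n) : alphaPerm n hn ∈ FSymSub n := by
  show {x | alphaPerm n hn x ≠ x}.Finite
  apply Set.Finite.subset ((Set.finite_singleton (ray0 n hn, 1)).insert (ray0 n hn, 0))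
  intro x hx
  by_contra hc
  simp only [Set.mem_insert_iff, Set.mem_singleton_iff, not_or] at hc
  exact hx (Equiv.swap_apply_of_ne_of_ne hc.1 hc.2)

theorem swap_mem_houghton {n : ℕ} (P Q : XH n) : Equiv.swap P Q ∈ Houghton n := by
  classical
  refine ⟨0, {P, Q}, ?_⟩
  intro x hx
  simp only [Finset.mem_insert, Finset.mem_singleton, not_or] at hx
  rw [Equiv.swap_apply_of_ne_of_ne hx.1 hx.2]
  simp

/-- The transposition exchanging two points, as an element of `H_n`. -/
def hSwap {n : ℕ} (P Q : XH n) : Houghton n := ⟨Equiv.swap P Q, swap_mem_houghton P Q⟩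

/-- The set of generators `{g_2, …, g_n}` of `H_n`. -/
def houghtonGensOnly (n : ℕ) (hn : 0 < n) : Set (Houghton n) :=
  {x | ∃ (i : Fin n) (hi : i ≠ ray0 n hn), x = hGen n hn i hi}

/-- The chosen generating set of `H_n`: `{g_2, …, g_n}` for `n ≠ 2`,
and `{g_2, α}` for `n = 2`. -/
def houghtonGenSet (n : ℕ) (hn : 0 < n) : Set (Houghton n) :=
  if n = 2 then houghtonGensOnly n hn ∪ {hAlpha n hn} else houghtonGensOnly n hn

/-- Word length with respect to a set of generators (and their inverses). -/
noncomputable def wordLength {G : Type*} [Group G] (S : Set G) (g : G) : ℕ :=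
  sInf {k | ∃ l : List G, (∀ x ∈ l, x ∈ S ∨ x⁻¹ ∈ S) ∧ l.length = k ∧ l.prod = g}

/-- The growth rate of an endomorphism `φ`:
`GR(φ) = sup_g limsup_k |φ^k(g)|^{1/k}`. -/
noncomputable def growthRate {G : Type*} [Group G] (S : Set G) (φ : G →* G) : ℝ :=
  ⨆ g : G, Filter.limsup
    (fun k : ℕ => (wordLength S ((⇑φ)^[k] g) : ℝ) ^ (1 / (k : ℝ))) Filter.atTop

/-- The orbit of `x` under the permutation `h`. -/
def permOrbit {α : Type*} (h : Equiv.Perm α) (x : α) : Set α :=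
  Set.range (fun k : ℤ => (h ^ k) x)

/-- `x` has infinite orbit under `h` (`x` is an essential point of `h`). -/
def InfiniteOrbit {α : Type*} (h : Equiv.Perm α) (x : α) : Prop :=
  (permOrbit h x).Infinite

/-- The image `φ(g_i)` as a permutation of `X_n`. -/
def imageGen {n : ℕ} (h0 : 0 < n) (φ : Houghton n →* Houghton n)
    (i : Fin n) (hi : i ≠ ray0 n h0) : Equiv.Perm (XH n) :=
  ↑(φ (hGen n h0 i hi))

/-- The image `φ(α)` as a permutation of `X_n`. -/
def imageAlpha {n : ℕ} (h0 : 0 < n) (φ : Houghton n →* Houghton n) : Equiv.Perm (XH n) :=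
  ↑(φ (hAlpha n h0))

/-- A transposition-orbit of an involution: a pair `{x, h x}` with `h x ≠ x`. -/
def TOrbit {Ω : Type*} (h : Equiv.Perm Ω) (T : Set Ω) : Prop :=
  ∃ x, h x ≠ x ∧ T = {x, h x}

/-- The zero-sum vectors in `ℤ^n`. -/
def zeroSum (n : ℕ) : AddSubgroup (Fin n → ℤ) where
  carrier := {m | ∑ j, m j = 0}
  zero_mem' := by simp
  add_mem' := by
    intro a b ha hb
    simp only [Set.mem_setOf_eq] at *
    simp [Finset.sum_add_distrib, ha, hb]
  neg_mem' := by
    intro a ha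
    simp only [Set.mem_setOf_eq] at *
    simp [ha]

/-! ## Word length -/

namespace GRaux

open Filter Topology

section WL
variable {G : Type*} [Group G] {S : Set G}

/-- `l` is a word in the generators and their inverses. -/
def IsWord (S : Set G) (l : List G) : Prop := ∀ x ∈ l, x ∈ S ∨ x⁻¹ ∈ S

theorem exists_list_of_cl {g : G} (hg : g ∈ Subgroup.closure S) :
    ∃ l : List G, (∀ x ∈ l, x ∈ S ∨ x⁻¹ ∈ S) ∧ l.prod = g := by
  rw [← Subgroup.mem_toSubmonoid, Subgroup.closure_toSubmonoid] at hg
  obtain ⟨l, hl, hp⟩ := Submonoid.exists_list_of_mem_closure hg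
  exact ⟨l, fun x hx => by simpa using hl x hx, hp⟩

theorem wl_le_of_word {l : List G} (h : IsWord S l) : wordLength S l.prod ≤ l.length :=
  Nat.sInf_le ⟨l, h, rfl, rfl⟩

theorem exists_word (hS : Subgroup.closure S = ⊤) (g : G) :
    ∃ l : List G, IsWord S l ∧ l.length = wordLength S g ∧ l.prod = g := by
  have hne : {k | ∃ l : List G, (∀ x ∈ l, x ∈ S ∨ x⁻¹ ∈ S) ∧ l.length = k ∧ l.prod = g}.Nonempty := by
    have hg : g ∈ Subgroup.closure S := by rw [hS]; trivial
    obtain ⟨l, hl, hp⟩ := exists_list_of_cl hg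
    exact ⟨l.length, l, hl, rfl, hp⟩
  exact Nat.sInf_mem hne

theorem wl_one : wordLength S (1 : G) = 0 := by
  have := wl_le_of_word (S := S) (l := []) (by intro x hx; simp at hx)
  simpa using this

theorem wl_mul (hS : Subgroup.closure S = ⊤) (g h : G) :
    wordLength S (g * h) ≤ wordLength S g + wordLength S h := by
  obtain ⟨l, hl, e, rfl⟩ := exists_word hS g
  obtain ⟨l', hl', e', rfl⟩ := exists_word hS h
  rw [← e, ← e', ← List.prod_append, ← List.length_append]
  apply wl_le_of_word
  intro x hx
  rcases List.mem_append.mp hx with h | h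
  exacts [hl x h, hl' x h]

theorem wl_eq_zero (hS : Subgroup.closure S = ⊤) {g : G} (h : wordLength S g = 0) : g = 1 := by
  obtain ⟨l, hl, e, rfl⟩ := exists_word hS g
  rw [h, List.length_eq_zero_iff] at e
  simp [e]

theorem wl_pos (hS : Subgroup.closure S = ⊤) {g : G} (h : g ≠ 1) : 1 ≤ wordLength S g := by
  by_contra hc
  exact h (wl_eq_zero hS (by omega))

theorem wl_inv_le (hS : Subgroup.closure S = ⊤) (g : G) :
    wordLength S g⁻¹ ≤ wordLength S g := by
  obtain ⟨l, hl, e, rfl⟩ := exists_word hS g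
  rw [← e, List.prod_inv_reverse]
  refine (wl_le_of_word ?_).trans (by simp)
  intro τ hτ
  rw [List.mem_reverse, List.mem_map] at hτ
  obtain ⟨σ, hσ, rfl⟩ := hτ
  rcases hl σ hσ with h | h
  · right; simpa using h
  · left; exact h

/-- Images of words have linearly bounded length. -/
theorem wl_map_word {H : Type*} [Group H] {T : Set H} (hT : Subgroup.closure T = ⊤)
    (hfin : S.Finite) (φ : G →* H) :
    ∃ M : ℕ, 1 ≤ M ∧ ∀ l : List G, IsWord S l → wordLength T (φ l.prod) ≤ M * l.length := by
  obtain ⟨M, hM⟩ := (hfin.image (fun s => wordLength T (φ s))).bddAbove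
  refine ⟨M + 1, by omega, fun l => ?_⟩
  induction l with
  | nil => intro _; simp [wl_one]
  | cons a l ih =>
    intro h
    have h1 := ih (fun x hx => h x (List.mem_cons_of_mem _ hx))
    have h2 : wordLength T (φ a) ≤ M := by
      rcases h a List.mem_cons_self with ha | ha
      · exact hM ⟨a, ha, rfl⟩
      · have := hM ⟨a⁻¹, ha, rfl⟩
        have h3 := wl_inv_le hT (φ a⁻¹)
        simp only [map_inv, inv_inv] at h3 this
        omega
    rw [List.prod_cons, map_mul, List.length_cons]
    have := wl_mul hT (φ a) (φ l.prod)
    nlinarith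

theorem wl_iter_le (hS : Subgroup.closure S = ⊤) (hfin : S.Finite) (φ : G →* G) :
    ∃ M : ℕ, 1 ≤ M ∧ ∀ (g : G) (k : ℕ), wordLength S ((⇑φ)^[k] g) ≤ wordLength S g * M ^ k := by
  obtain ⟨M, h1, hM⟩ := wl_map_word hS hfin φ
  refine ⟨M, h1, fun g k => ?_⟩
  induction k with
  | zero => simp
  | succ k ih =>
    rw [Function.iterate_succ_apply']
    obtain ⟨l, hl, e, e'⟩ := exists_word hS ((⇑φ)^[k] g)
    have := hM l hl
    rw [e', e] at this
    refine this.trans ?_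
    rw [pow_succ]
    calc M * _ ≤ M * (wordLength S g * M ^ k) := Nat.mul_le_mul_left _ ih
      _ = _ := by ring

end WL

/-! ## Limsup facts -/

/-- The sequence `a_k^{1/k}`. -/
noncomputable def rt (a : ℕ → ℕ) (k : ℕ) : ℝ := (a k : ℝ) ^ (1 / (k : ℝ))

theorem rt_nonneg (a : ℕ → ℕ) (k : ℕ) : 0 ≤ rt a k := Real.rpow_nonneg (Nat.cast_nonneg _) _

theorem rt_tendsto_aux (C L : ℝ) (hC : 0 < C) :
    Tendsto (fun k : ℕ => C ^ (1 / (k : ℝ)) * L) atTop (𝓝 L) := by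
  have h1 : Tendsto (fun k : ℕ => C ^ (1 / (k : ℝ))) atTop (𝓝 1) := by
    have := (tendsto_const_nhds (x := C) (f := atTop (α := ℕ))).rpow
      tendsto_one_div_atTop_nhds_zero_nat (Or.inl hC.ne')
    simpa using this
  simpa using h1.mul_const L

theorem rt_le (a : ℕ → ℕ) (C L : ℝ) (hC : 0 < C) (hL : 0 ≤ L) {k : ℕ} (hk : 1 ≤ k)
    (h : (a k : ℝ) ≤ C * L ^ k) : rt a k ≤ C ^ (1 / (k : ℝ)) * L := by
  unfold rt
  calc (a k : ℝ) ^ (1 / (k : ℝ)) ≤ (C * L ^ k) ^ (1 / (k : ℝ)) :=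
        Real.rpow_le_rpow (Nat.cast_nonneg _) h (by positivity)
    _ = _ := by
      rw [Real.mul_rpow hC.le (by positivity), one_div, Real.pow_rpow_inv_natCast hL (by omega)]

theorem cob (a : ℕ → ℕ) : IsCoboundedUnder (· ≤ ·) atTop (rt a) :=
  IsBoundedUnder.isCoboundedUnder_le (isBoundedUnder_of ⟨0, fun k => rt_nonneg a k⟩)

theorem bdd_of (a : ℕ → ℕ) (C L : ℝ) (hC : 0 < C) (hL : 0 ≤ L)
    (h : ∀ᶠ k in atTop, (a k : ℝ) ≤ C * L ^ k) : IsBoundedUnder (· ≤ ·) atTop (rt a) := by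
  refine (rt_tendsto_aux C L hC).isBoundedUnder_le.mono_le ?_
  filter_upwards [h, eventually_ge_atTop 1] with k h1 h2
  exact rt_le a C L hC hL h2 h1

theorem limsup_le_of (a : ℕ → ℕ) (C L : ℝ) (hC : 0 < C) (hL : 0 ≤ L)
    (h : ∀ᶠ k in atTop, (a k : ℝ) ≤ C * L ^ k) : limsup (rt a) atTop ≤ L := by
  rw [← (rt_tendsto_aux C L hC).limsup_eq]
  refine limsup_le_limsup ?_ (cob a) (rt_tendsto_aux C L hC).isBoundedUnder_le
  filter_upwards [h, eventually_ge_atTop 1] with k h1 h2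
  exact rt_le a C L hC hL h2 h1

theorem one_le_limsup (a : ℕ → ℕ) (hb : IsBoundedUnder (· ≤ ·) atTop (rt a))
    (h : ∀ᶠ k in atTop, 1 ≤ a k) : 1 ≤ limsup (rt a) atTop := by
  apply le_limsup_of_frequently_le _ hb
  apply Eventually.frequently
  filter_upwards [h] with k hk
  exact Real.one_le_rpow (by exact_mod_cast hk) (by positivity)

theorem limsup_eq_zero (a : ℕ → ℕ) (h : ∀ᶠ k in atTop, a k = 0) : limsup (rt a) atTop = 0 := by
  rw [show (0 : ℝ) = limsup (fun _ : ℕ => (0 : ℝ)) atTop from (limsup_const 0).symm]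
  apply limsup_congr
  filter_upwards [h, eventually_ge_atTop 1] with k hk h1
  unfold rt
  rw [hk, Nat.cast_zero, Real.zero_rpow]
  have : (k : ℝ) ≠ 0 := by exact_mod_cast (by omega : k ≠ 0)
  positivity

section GR
variable {G : Type*} [Group G] {S : Set G}

/-- The length sequence. -/
noncomputable def lseq (S : Set G) (φ : G →* G) (g : G) (k : ℕ) : ℕ := wordLength S ((⇑φ)^[k] g)

theorem growthRate_eq (φ : G →* G) : growthRate S φ = ⨆ g : G, limsup (rt (lseq S φ g)) atTop := rfl

theorem sq_bound (hS : Subgroup.closure S = ⊤) (hfin : S.Finite) (φ : G →* G) :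
    ∃ M : ℝ, 1 ≤ M ∧ ∀ g, ∃ C : ℝ, 0 < C ∧ ∀ᶠ k in atTop, (lseq S φ g k : ℝ) ≤ C * M ^ k := by
  obtain ⟨M, h1, hM⟩ := wl_iter_le hS hfin φ
  refine ⟨M, by exact_mod_cast h1, fun g => ⟨wordLength S g + 1, by positivity, ?_⟩⟩
  refine Eventually.of_forall fun k => ?_
  have h2 : (lseq S φ g k : ℝ) ≤ wordLength S g * (M : ℝ) ^ k := by exact_mod_cast hM g k
  have : (0 : ℝ) ≤ (M : ℝ) ^ k := by positivity
  nlinarith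

theorem sq_bdd (hS : Subgroup.closure S = ⊤) (hfin : S.Finite) (φ : G →* G) (g : G) :
    IsBoundedUnder (· ≤ ·) atTop (rt (lseq S φ g)) := by
  obtain ⟨M, h1, h⟩ := sq_bound hS hfin φ
  obtain ⟨C, hC, h⟩ := h g
  exact bdd_of _ C M hC (by linarith) h

theorem gr_bdd (hS : Subgroup.closure S = ⊤) (hfin : S.Finite) (φ : G →* G) :
    BddAbove (Set.range fun g => limsup (rt (lseq S φ g)) atTop) := by
  obtain ⟨M, h1, h⟩ := sq_bound hS hfin φ
  refine ⟨M, ?_⟩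
  rintro _ ⟨g, rfl⟩
  obtain ⟨C, hC, h⟩ := h g
  exact limsup_le_of _ C M hC (by linarith) h

theorem le_gr (hS : Subgroup.closure S = ⊤) (hfin : S.Finite) (φ : G →* G) (g : G) :
    limsup (rt (lseq S φ g)) atTop ≤ growthRate S φ := le_ciSup (gr_bdd hS hfin φ) g

theorem gr_eq_zero (φ : G →* G) (k : ℕ) (h : ∀ x, (⇑φ)^[k] x = 1) : growthRate S φ = 0 := by
  rw [growthRate_eq]
  have : ∀ g, limsup (rt (lseq S φ g)) atTop = 0 := by
    intro g
    apply limsup_eq_zero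
    filter_upwards [eventually_ge_atTop k] with j hj
    obtain ⟨i, rfl⟩ := Nat.exists_eq_add_of_le hj
    unfold lseq
    rw [Function.iterate_add_apply, h, wl_one]
  simp [this]

/-- A non eventually trivial endomorphism has growth rate at least one. -/
theorem one_le_gr (hS : Subgroup.closure S = ⊤) (hfin : S.Finite) (φ : G →* G)
    (h : ¬ ∃ k : ℕ, 1 ≤ k ∧ ∀ x, (⇑φ)^[k] x = 1) : 1 ≤ growthRate S φ := by
  have hex : ∃ g, ∀ k, (⇑φ)^[k] g ≠ 1 := by
    by_contra hc
    push Not at hc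
    choose K hK using hc
    obtain ⟨B, hB⟩ := (hfin.image K).bddAbove
    apply h
    refine ⟨B + 1, by omega, fun x => ?_⟩
    have hx : x ∈ Subgroup.closure S := by rw [hS]; trivial
    induction hx using Subgroup.closure_induction with
    | mem x hx =>
      obtain ⟨i, hi⟩ := Nat.exists_eq_add_of_le (show K x ≤ B + 1 from (hB ⟨x, hx, rfl⟩).trans (by omega))
      rw [hi, add_comm, Function.iterate_add_apply, hK, iterate_map_one]
    | one => exact iterate_map_one _ _
    | mul x y _ _ hx hy => rw [iterate_map_mul, hx, hy, one_mul]
    | inv x _ hx => rw [iterate_map_inv, hx, inv_one]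
  obtain ⟨g, hg⟩ := hex
  refine le_trans ?_ (le_gr hS hfin φ g)
  exact one_le_limsup _ (sq_bdd hS hfin φ g) (Eventually.of_forall fun k => wl_pos hS (hg k))

end GR

/-! ## Translation vectors and generation -/

section Hou
variable {n : ℕ}

theorem htv_unique {g : Equiv.Perm (XH n)} {m m' : Fin n → ℤ}
    (h : HasTranslationVector g m) (h' : HasTranslationVector g m') : m = m' := by
  classical
  obtain ⟨K, hK⟩ := h
  obtain ⟨K', hK'⟩ := h'
  funext i
  obtain ⟨p, hp⟩ := Infinite.exists_notMem_finset ((K ∪ K').image Prod.snd)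
  have h1 : (i, p) ∉ K := fun hc =>
    hp (Finset.mem_image.mpr ⟨_, Finset.mem_union_left _ hc, rfl⟩)
  have h2 : (i, p) ∉ K' := fun hc =>
    hp (Finset.mem_image.mpr ⟨_, Finset.mem_union_right _ hc, rfl⟩)
  have e1 := (hK _ h1).2
  have e2 := (hK' _ h2).2
  simp only at e1 e2
  omega

theorem htv_mul {a b : Equiv.Perm (XH n)} {ma mb : Fin n → ℤ}
    (ha : HasTranslationVector a ma) (hb : HasTranslationVector b mb) :
    HasTranslationVector (a * b) (ma + mb) := by
  obtain ⟨Ka, hKa⟩ := ha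
  obtain ⟨Kb, hKb⟩ := hb
  classical
  refine ⟨Kb ∪ Ka.image b.symm, fun x hx => ?_⟩
  simp only [Finset.mem_union, not_or] at hx
  have hbx : b x ∉ Ka := by
    intro hc
    exact hx.2 (Finset.mem_image.mpr ⟨b x, hc, b.symm_apply_apply x⟩)
  obtain ⟨hb1, hb2⟩ := hKb x hx.1
  obtain ⟨ha1, ha2⟩ := hKa (b x) hbx
  refine ⟨?_, ?_⟩
  · show (a (b x)).1 = x.1
    rw [ha1, hb1]
  · show ((a (b x)).2 : ℤ) = (x.2 : ℤ) + (ma + mb) x.1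
    rw [ha2, hb1, hb2, Pi.add_apply]
    ring

/-- The translation vector homomorphism. -/
noncomputable def tv : Houghton n →* Multiplicative (Fin n → ℤ) where
  toFun g := Multiplicative.ofAdd (Classical.choose g.2)
  map_one' := by
    have h := Classical.choose_spec (1 : Houghton n).2
    have h' : HasTranslationVector ((1 : Houghton n) : Equiv.Perm (XH n)) 0 :=
      ⟨∅, fun x _ => by simp⟩
    rw [htv_unique h h']; rfl
  map_mul' a b := by
    have h := Classical.choose_spec (a * b : Houghton n).2
    have h' := htv_mul (Classical.choose_spec a.2) (Classical.choose_spec b.2)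
    rw [htv_unique h h']; rfl

theorem tv_spec (g : Houghton n) :
    HasTranslationVector (g : Equiv.Perm (XH n)) (tv g).toAdd := Classical.choose_spec g.2

theorem tv_eq {g : Houghton n} {m : Fin n → ℤ}
    (h : HasTranslationVector (g : Equiv.Perm (XH n)) m) : tv g = Multiplicative.ofAdd m :=
  congrArg Multiplicative.ofAdd (htv_unique (tv_spec g) h)

theorem mem_FSym_of_tv {g : Houghton n} (h : tv g = 1) :
    (g : Equiv.Perm (XH n)) ∈ FSymSub n := by
  obtain ⟨K, hK⟩ := tv_spec g
  rw [h] at hK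
  refine K.finite_toSet.subset fun x hx => ?_
  by_contra hc
  obtain ⟨h1, h2⟩ := hK x hc
  apply hx
  refine Prod.ext h1 ?_
  simp only [toAdd_one, Pi.zero_apply, add_zero] at h2
  exact_mod_cast h2

/-- The translation vector has zero sum. -/
theorem htv_sum {g : Equiv.Perm (XH n)} {m : Fin n → ℤ} (h : HasTranslationVector g m) :
    ∑ i, m i = 0 := by
  classical
  obtain ⟨K, hK⟩ := h
  obtain ⟨N1, hN1⟩ := (K.finite_toSet.image Prod.snd).bddAbove
  obtain ⟨N2, hN2⟩ := (Set.finite_range fun i => (m i).natAbs).bddAbove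
  have hN2' : ∀ i, (m i).natAbs ≤ N2 := fun i => hN2 ⟨i, rfl⟩
  obtain ⟨N, hN⟩ : ∃ N, N = N1 + N2 + 1 := ⟨_, rfl⟩
  have hout : ∀ i p, N ≤ p → (g (i, p)).1 = i ∧ ((g (i, p)).2 : ℤ) = (p : ℤ) + m i := by
    intro i p hp
    apply hK (i, p)
    intro hc
    have : p ≤ N1 := hN1 ⟨_, hc, rfl⟩
    omega
  let A : Finset (Σ _ : Fin n, ℕ) := Finset.univ.sigma fun _ => Finset.range N
  let B : Finset (Σ _ : Fin n, ℕ) := Finset.univ.sigma fun i => Finset.range (N + m i).toNat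
  have hcard : A.card = B.card := by
    apply Finset.card_bij (fun x _ => (⟨(g (x.1, x.2)).1, (g (x.1, x.2)).2⟩ : Σ _ : Fin n, ℕ))
    · rintro ⟨i, p⟩ hx
      simp only [A, B, Finset.mem_sigma, Finset.mem_univ, true_and, Finset.mem_range] at hx ⊢
      by_contra hc
      have hb := hN2' (g (i, p)).1
      obtain ⟨q, hq⟩ : ∃ q : ℕ, (q : ℤ) = (g (i, p)).2 - m (g (i, p)).1 :=
        ⟨((g (i, p)).2 - m (g (i, p)).1).toNat, by omega⟩
      obtain ⟨h1, h2⟩ := hout (g (i, p)).1 q (by omega)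
      have : g ((g (i, p)).1, q) = g (i, p) := Prod.ext h1 (by omega)
      have := congrArg Prod.snd (g.injective this)
      simp only at this
      omega
    · rintro ⟨i, p⟩ _ ⟨j, q⟩ _ h
      simp only [Sigma.mk.injEq, heq_eq_eq] at h
      have := g.injective (Prod.ext h.1 h.2)
      simp only [Prod.mk.injEq] at this
      rw [this.1, this.2]
    · rintro ⟨j, q⟩ hx
      simp only [A, B, Finset.mem_sigma, Finset.mem_univ, true_and, Finset.mem_range] at hx
      refine ⟨⟨(g.symm (j, q)).1, (g.symm (j, q)).2⟩, ?_, by simp⟩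
      simp only [A, B, Finset.mem_sigma, Finset.mem_univ, true_and, Finset.mem_range]
      by_contra hc
      obtain ⟨h1, h2⟩ := hout (g.symm (j, q)).1 (g.symm (j, q)).2 (by omega)
      simp only [Prod.mk.eta, Equiv.apply_symm_apply] at h1 h2
      rw [← h1] at h2
      omega
  simp only [A, B, Finset.card_sigma, Finset.card_range] at hcard
  have h3 : ∑ i : Fin n, (N : ℤ) = ∑ i : Fin n, ((N : ℤ) + m i) := by
    have : ((∑ i : Fin n, N : ℕ) : ℤ) = ((∑ i : Fin n, (N + m i).toNat : ℕ) : ℤ) := by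
      exact_mod_cast hcard
    push_cast at this
    rw [show ∑ i : Fin n, (N : ℤ) = ∑ i : Fin n, max ((N : ℤ) + m i) 0 by simpa using this]
    refine Finset.sum_congr rfl fun i _ => ?_
    have := hN2' i
    omega
  rw [Finset.sum_add_distrib] at h3
  linarith

/-- Conjugating a swap. -/
theorem conj_hSwap (g : Houghton n) (P Q : XH n) :
    g * hSwap P Q * g⁻¹ = hSwap ((g : Equiv.Perm (XH n)) P) ((g : Equiv.Perm (XH n)) Q) := by
  apply Subtype.ext
  show (g : Equiv.Perm (XH n)) * Equiv.swap P Q * (g : Equiv.Perm (XH n))⁻¹ = Equiv.swap _ _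
  rw [Equiv.mul_swap_eq_swap_mul, mul_assoc, mul_inv_cancel, mul_one]

theorem hSwap_mul_self (P Q : XH n) : hSwap P Q * hSwap P Q = 1 := by
  apply Subtype.ext
  exact Equiv.swap_mul_self P Q

theorem hSwap_self (P : XH n) : hSwap P P = 1 := by
  apply Subtype.ext
  exact Equiv.swap_self P

theorem hSwap_comm (P Q : XH n) : hSwap P Q = hSwap Q P := by
  apply Subtype.ext
  exact Equiv.swap_comm P Q

/-- A finitely supported permutation is a product of swaps. -/
theorem fsym_list {g : Houghton n} (h : (g : Equiv.Perm (XH n)) ∈ FSymSub n) :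
    ∃ l : List (Houghton n), (∀ τ ∈ l, ∃ P Q, P ≠ Q ∧ τ = hSwap P Q) ∧ l.prod = g := by
  classical
  have h1 : (g : Equiv.Perm (XH n)) ∈ Subgroup.closure {σ : Equiv.Perm (XH n) | σ.IsSwap} := by
    rw [_root_.mem_closure_isSwap']
    exact h
  obtain ⟨l, hl, hp⟩ := exists_list_of_cl h1
  clear h h1
  induction l generalizing g with
  | nil => exact ⟨[], by simp, Subtype.ext (by simpa using hp)⟩
  | cons a l ih =>
    have ha : ∃ P Q, P ≠ Q ∧ a = Equiv.swap P Q := by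
      rcases hl a List.mem_cons_self with ⟨P, Q, hPQ, h⟩ | ⟨P, Q, hPQ, h⟩
      · exact ⟨P, Q, hPQ, by rw [h]⟩
      · exact ⟨P, Q, hPQ, by rw [← inv_inv a, h, Equiv.swap_inv]⟩
    obtain ⟨P, Q, hPQ, rfl⟩ := ha
    have hp' : l.prod = ((hSwap P Q * g : Houghton n) : Equiv.Perm (XH n)) := by
      show _ = Equiv.swap P Q * (g : Equiv.Perm (XH n))
      rw [← hp, List.prod_cons, ← mul_assoc, Equiv.swap_mul_self, one_mul]
    obtain ⟨l', h1, h2⟩ := ih (fun x hx => hl x (List.mem_cons_of_mem _ hx)) hp'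
    refine ⟨hSwap P Q :: l', ?_, ?_⟩
    · intro τ hτ
      rcases List.mem_cons.mp hτ with rfl | h
      exacts [⟨P, Q, hPQ, rfl⟩, h1 τ h]
    · rw [List.prod_cons, h2, ← mul_assoc, hSwap_mul_self, one_mul]

theorem finite_genset (h0 : 0 < n) : (houghtonGenSet n h0).Finite := by
  have h : (houghtonGensOnly n h0).Finite := by
    refine (Set.finite_range (fun i : {i : Fin n // i ≠ ray0 n h0} => hGen n h0 i.1 i.2)).subset ?_
    rintro x ⟨i, hi, rfl⟩
    exact ⟨⟨i, hi⟩, rfl⟩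
  unfold houghtonGenSet
  split_ifs
  · exact h.union (Set.finite_singleton _)
  · exact h

theorem hGen_mem_closure (h0 : 0 < n) (i : Fin n) (hi : i ≠ ray0 n h0) :
    hGen n h0 i hi ∈ Subgroup.closure (houghtonGenSet n h0) := by
  apply Subgroup.subset_closure
  unfold houghtonGenSet
  split_ifs
  · exact Or.inl ⟨i, hi, rfl⟩
  · exact ⟨i, hi, rfl⟩

theorem comm_swap (h0 : 0 < n) (i j : Fin n) (hi : i ≠ ray0 n h0) (hj : j ≠ ray0 n h0)
    (hij : i ≠ j) :
    hGen n h0 i hi * hGen n h0 j hj = hSwap (i, 0) (j, 0) * (hGen n h0 j hj * hGen n h0 i hi) := by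
  apply Subtype.ext
  apply Equiv.ext
  rintro ⟨k, p⟩
  show gFun n h0 i (gFun n h0 j (k, p)) =
    Equiv.swap (i, 0) (j, 0) (gFun n h0 j (gFun n h0 i (k, p)))
  have hji := hij.symm
  have hi' := hi.symm
  have hj' := hj.symm
  by_cases hk : k = ray0 n h0
  · subst hk
    rcases p with _ | _ | p
    · simp [gFun, Equiv.swap_apply_def, *]
    · simp [gFun, Equiv.swap_apply_def, *]
    · simp [gFun, Equiv.swap_apply_def, *]
  · by_cases hki : k = i
    · subst hki
      simp [gFun, Equiv.swap_apply_def, *]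
    · by_cases hkj : k = j
      · subst hkj
        simp [gFun, Equiv.swap_apply_def, *]
      · simp [gFun, Equiv.swap_apply_def, *]

theorem swap_mem_closure (hn : 2 ≤ n) (h0 : 0 < n) (P Q : XH n) :
    hSwap P Q ∈ Subgroup.closure (houghtonGenSet n h0) := by
  set U := Subgroup.closure (houghtonGenSet n h0) with hU
  have inv : ∀ g ∈ U, ∀ P Q : XH n, hSwap P Q ∈ U →
      hSwap ((g : Equiv.Perm (XH n)) P) ((g : Equiv.Perm (XH n)) Q) ∈ U := by
    intro g hg P Q h
    rw [← conj_hSwap]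
    exact U.mul_mem (U.mul_mem hg h) (U.inv_mem hg)
  have symm : ∀ P Q : XH n, hSwap P Q ∈ U → hSwap Q P ∈ U := by
    intro P Q h; rwa [hSwap_comm]
  have trans : ∀ P Q R : XH n, hSwap P Q ∈ U → hSwap Q R ∈ U → hSwap P R ∈ U := by
    intro P Q R h1 h2
    by_cases hQR : R = Q
    · rwa [hQR]
    by_cases hPR : R = P
    · rw [hPR, hSwap_self]; exact U.one_mem
    have := inv _ h1 Q R h2
    have e1 : ((hSwap P Q : Houghton n) : Equiv.Perm (XH n)) Q = P := Equiv.swap_apply_right P Q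
    have e2 : ((hSwap P Q : Houghton n) : Equiv.Perm (XH n)) R = R :=
      Equiv.swap_apply_of_ne_of_ne hPR hQR
    rwa [e1, e2] at this
  have gU := hGen_mem_closure (n := n) h0
  have stepF : ∀ i (hi : i ≠ ray0 n h0) (P Q : XH n), hSwap P Q ∈ U →
      hSwap (gFun n h0 i P) (gFun n h0 i Q) ∈ U := fun i hi P Q h => inv _ (gU i hi) P Q h
  have stepB : ∀ i (hi : i ≠ ray0 n h0) (P Q : XH n), hSwap P Q ∈ U →
      hSwap (gInvFun n h0 i P) (gInvFun n h0 i Q) ∈ U :=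
    fun i hi P Q h => inv _ (U.inv_mem (gU i hi)) P Q h
  have one_ne : (⟨1, by omega⟩ : Fin n) ≠ ray0 n h0 := by simp [ray0]
  have base : hSwap (ray0 n h0, 0) (ray0 n h0, 1) ∈ U := by
    by_cases h2 : n = 2
    · apply Subgroup.subset_closure
      unfold houghtonGenSet
      rw [if_pos h2]
      exact Or.inr rfl
    · obtain ⟨i, hi⟩ : ∃ i : Fin n, i = ⟨1, by omega⟩ := ⟨_, rfl⟩
      obtain ⟨j, hj⟩ : ∃ j : Fin n, j = ⟨2, by omega⟩ := ⟨_, rfl⟩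
      have hi0 : i ≠ ray0 n h0 := by rw [hi]; simp [ray0]
      have hj0 : j ≠ ray0 n h0 := by rw [hj]; simp [ray0]
      have hij : i ≠ j := by rw [hi, hj]; simp
      have h1 : hSwap (i, 0) (j, 0) ∈ U := by
        have := comm_swap h0 i j hi0 hj0 hij
        rw [eq_mul_inv_iff_mul_eq.mpr this.symm]
        exact U.mul_mem (U.mul_mem (gU _ _) (gU _ _)) (U.inv_mem (U.mul_mem (gU _ _) (gU _ _)))
      have h2 := stepB i hi0 _ _ h1
      have h3 := stepB j hj0 _ _ h2
      apply symm
      simpa [gInvFun, hij, hij.symm, hi0, hj0, hi0.symm, hj0.symm] using h3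
  have ray0step : ∀ p, hSwap (ray0 n h0, p) (ray0 n h0, p + 1) ∈ U := by
    intro p
    induction p with
    | zero => exact base
    | succ p ih =>
      have := stepB _ one_ne _ _ ih
      simpa [gInvFun, one_ne.symm] using this
  have ray0all : ∀ p, hSwap (ray0 n h0, 0) (ray0 n h0, p) ∈ U := by
    intro p
    induction p with
    | zero => rw [hSwap_self]; exact U.one_mem
    | succ p ih => exact trans _ _ _ ih (ray0step p)
  have link : ∀ i, i ≠ ray0 n h0 → hSwap (ray0 n h0, 0) (i, 0) ∈ U := by
    intro i hi
    have := stepF i hi _ _ base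
    apply symm
    simpa [gFun] using this
  have raystep : ∀ i, i ≠ ray0 n h0 → ∀ p, hSwap (i, p) (i, p + 1) ∈ U := by
    intro i hi p
    induction p with
    | zero =>
      have := stepF i hi _ _ (link i hi)
      simpa [gFun, hi] using this
    | succ p ih =>
      have := stepF i hi _ _ ih
      simpa [gFun, hi] using this
  have all : ∀ x : XH n, hSwap (ray0 n h0, 0) x ∈ U := by
    rintro ⟨i, p⟩
    by_cases hi : i = ray0 n h0
    · rw [hi]; exact ray0all p
    · induction p with
      | zero => exact link i hi
      | succ p ih => exact trans _ _ _ ih (raystep i hi p)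
  exact trans _ _ _ (symm _ _ (all P)) (all Q)

theorem fsym_le_closure (hn : 2 ≤ n) (h0 : 0 < n) {g : Houghton n}
    (h : (g : Equiv.Perm (XH n)) ∈ FSymSub n) :
    g ∈ Subgroup.closure (houghtonGenSet n h0) := by
  obtain ⟨l, hl, rfl⟩ := fsym_list h
  apply Subgroup.list_prod_mem
  intro x hx
  obtain ⟨P, Q, _, rfl⟩ := hl x hx
  exact swap_mem_closure hn h0 P Q

theorem tv_hGen (h0 : 0 < n) (i : Fin n) (hi : i ≠ ray0 n h0) :
    tv (hGen n h0 i hi) = Multiplicative.ofAdd (gVec n h0 i) := by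
  apply tv_eq
  refine ⟨{(ray0 n h0, 0)}, ?_⟩
  rintro ⟨j, p⟩ hx
  rw [Finset.mem_singleton] at hx
  have hx' : j ≠ ray0 n h0 ∨ p ≠ 0 := by
    by_contra h
    push Not at h
    exact hx (by rw [h.1, h.2])
  show (gFun n h0 i (j, p)).1 = j ∧ ((gFun n h0 i (j, p)).2 : ℤ) = (p : ℤ) + gVec n h0 i j
  simp only [gFun, gVec]
  split_ifs <;> simp_all [Prod.ext_iff] <;> omega

theorem exists_vec (h0 : 0 < n) (m : Fin n → ℤ) (s : Finset (Fin n)) (hs : ray0 n h0 ∉ s) :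
    ∃ w ∈ Subgroup.closure (houghtonGenSet n h0), ∀ i, i ≠ ray0 n h0 →
      (tv w).toAdd i = if i ∈ s then m i else 0 := by
  classical
  induction s using Finset.induction_on with
  | empty => exact ⟨1, Subgroup.one_mem _, fun i _ => by simp⟩
  | insert j s hj ih =>
    have hj0 : j ≠ ray0 n h0 := fun h => hs (by rw [h]; exact Finset.mem_insert_self _ _)
    obtain ⟨w, hw, h⟩ := ih (fun h => hs (Finset.mem_insert_of_mem h))
    refine ⟨w * hGen n h0 j hj0 ^ m j,
      Subgroup.mul_mem _ hw (Subgroup.zpow_mem _ (hGen_mem_closure h0 j hj0) _), fun i hi => ?_⟩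
    rw [map_mul, map_zpow, tv_hGen, toAdd_mul, toAdd_zpow, Pi.add_apply, h i hi]
    simp only [toAdd_ofAdd, Pi.smul_apply, gVec, hi, if_false]
    by_cases hij : i = j
    · subst hij; simp [hj]
    · simp [hij]

theorem closure_genset (hn : 2 ≤ n) (h0 : 0 < n) :
    Subgroup.closure (houghtonGenSet n h0) = ⊤ := by
  classical
  rw [eq_top_iff]
  intro g _
  obtain ⟨w, hw, h⟩ := exists_vec h0 (tv g).toAdd (Finset.univ.erase (ray0 n h0)) (by simp)
  have hgw : tv g = tv w := by
    have hne : ∀ i, i ≠ ray0 n h0 → (tv g).toAdd i = (tv w).toAdd i := by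
      intro i hi
      rw [h i hi]; simp [hi]
    have s1 := htv_sum (tv_spec g)
    have s2 := htv_sum (tv_spec w)
    rw [← Finset.add_sum_erase _ _ (Finset.mem_univ (ray0 n h0))] at s1 s2
    have s3 : ∑ i ∈ Finset.univ.erase (ray0 n h0), (tv g).toAdd i =
        ∑ i ∈ Finset.univ.erase (ray0 n h0), (tv w).toAdd i :=
      Finset.sum_congr rfl fun i hi => hne i (Finset.ne_of_mem_erase hi)
    apply Multiplicative.toAdd.injective
    funext i
    by_cases hi : i = ray0 n h0
    · rw [hi]; linarith
    · exact hne i hi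
  have h1 : g * w⁻¹ ∈ Subgroup.closure (houghtonGenSet n h0) := by
    apply fsym_le_closure hn h0
    apply mem_FSym_of_tv
    rw [map_mul, map_inv, hgw, mul_inv_cancel]
  have := Subgroup.mul_mem _ h1 hw
  simpa using this

/-! ## Kernel -/

theorem exists_fresh (h0 : 0 < n) (s : Finset (XH n)) : ∃ z, z ∉ s := by
  classical
  have : Nonempty (Fin n) := ⟨ray0 n h0⟩
  have : Infinite (XH n) := inferInstanceAs (Infinite (Fin n × ℕ))
  exact Infinite.exists_notMem_finset s

theorem ker_fsym (h0 : 0 < n) (φ : Houghton n →* Houghton n) (hker : φ.ker ≠ ⊥) :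
    ∃ f : Houghton n, φ f = 1 ∧ ∃ a x, (f : Equiv.Perm (XH n)) a = a ∧
      (f : Equiv.Perm (XH n)) x ≠ x := by
  classical
  obtain ⟨⟨f, hf⟩, hf2⟩ := Subgroup.ne_bot_iff_exists_ne_one.mp hker
  have hf1 : f ≠ 1 := fun h => hf2 (Subtype.ext h)
  rw [MonoidHom.mem_ker] at hf
  set F : Equiv.Perm (XH n) := (f : Equiv.Perm (XH n)) with hF
  obtain ⟨x, hx⟩ : ∃ x, F x ≠ x := by
    by_contra hc
    push Not at hc
    exact hf1 (Subtype.ext (Equiv.ext hc))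
  obtain ⟨z, hz⟩ := exists_fresh h0 {x, F x}
  simp only [Finset.mem_insert, Finset.mem_singleton, not_or] at hz
  obtain ⟨a, ha⟩ := exists_fresh h0 {x, z, F x, F z}
  simp only [Finset.mem_insert, Finset.mem_singleton, not_or] at ha
  refine ⟨f * hSwap x z * f⁻¹ * hSwap x z, ?_, a, z, ?_, ?_⟩
  · rw [map_mul, map_mul, map_mul, map_inv, hf, one_mul, inv_one, mul_one, ← map_mul,
      hSwap_mul_self, map_one]
  · rw [conj_hSwap]
    show Equiv.swap (F x) (F z) (Equiv.swap x z a) = a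
    rw [Equiv.swap_apply_of_ne_of_ne ha.1 ha.2.1, Equiv.swap_apply_of_ne_of_ne ha.2.2.1 ha.2.2.2]
  · rw [conj_hSwap]
    show Equiv.swap (F x) (F z) (Equiv.swap x z z) ≠ z
    rw [Equiv.swap_apply_right, Equiv.swap_apply_def]
    split_ifs with h1 h2
    · exact absurd h1.symm hx
    · exact fun h => hz.2 h.symm
    · exact fun h => hz.1 h.symm

theorem swaps_eq (h0 : 0 < n) (φ : Houghton n →* Houghton n) (hker : φ.ker ≠ ⊥)
    {P Q P' Q' : XH n} (hPQ : P ≠ Q) (hPQ' : P' ≠ Q') : φ (hSwap P Q) = φ (hSwap P' Q') := by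
  classical
  obtain ⟨f, hf, a, x, hfa, hfx⟩ := ker_fsym h0 φ hker
  set F : Equiv.Perm (XH n) := (f : Equiv.Perm (XH n)) with hF
  have inv : ∀ (u : Houghton n) (p q r : XH n), φ (hSwap p q) = φ (hSwap p r) →
      φ (hSwap ((u : Equiv.Perm (XH n)) p) ((u : Equiv.Perm (XH n)) q)) =
      φ (hSwap ((u : Equiv.Perm (XH n)) p) ((u : Equiv.Perm (XH n)) r)) := by
    intro u p q r h
    rw [← conj_hSwap, ← conj_hSwap, map_mul, map_mul, map_mul, map_mul, h]
  have h1 : φ (hSwap a x) = φ (hSwap a (F x)) := by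
    have : f * hSwap a x * f⁻¹ = hSwap a (F x) := by
      rw [conj_hSwap, ← hF, hfa]
    rw [← this, map_mul, map_mul, map_inv, hf]; simp
  have hax : a ≠ x := fun h => hfx (by rw [← h]; exact hfa)
  have hafx : a ≠ F x := fun h => hax (F.injective (by rw [hfa]; exact h))
  have all : ∀ p q r : XH n, p ≠ q → p ≠ r → q ≠ r → φ (hSwap p q) = φ (hSwap p r) := by
    intro p q r hpq hpr hqr
    set u1 := Equiv.swap a p
    have e1 : u1 a = p := Equiv.swap_apply_left _ _
    have k1 := inv (hSwap a p) _ _ _ h1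
    change φ (hSwap (u1 a) (u1 x)) = φ (hSwap (u1 a) (u1 (F x))) at k1
    have n1 : u1 a ≠ u1 x := u1.injective.ne hax
    have n2 : u1 a ≠ u1 (F x) := u1.injective.ne hafx
    have n3 : u1 x ≠ u1 (F x) := u1.injective.ne hfx.symm
    rw [e1] at k1 n1 n2
    generalize u1 x = y at *
    generalize u1 (F x) = w at *
    set u2 := Equiv.swap y q
    have k2 := inv (hSwap y q) _ _ _ k1
    change φ (hSwap (u2 p) (u2 y)) = φ (hSwap (u2 p) (u2 w)) at k2
    have e2 : u2 p = p := Equiv.swap_apply_of_ne_of_ne n1 hpq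
    have e3 : u2 y = q := Equiv.swap_apply_left _ _
    have n4 : u2 p ≠ u2 w := u2.injective.ne n2
    have n5 : u2 y ≠ u2 w := u2.injective.ne n3
    rw [e2] at n4
    rw [e3] at n5
    rw [e2, e3] at k2
    generalize u2 w = v at *
    have k3 := inv (hSwap v r) _ _ _ k2
    change φ (hSwap (Equiv.swap v r p) (Equiv.swap v r q)) =
      φ (hSwap (Equiv.swap v r p) (Equiv.swap v r v)) at k3
    rwa [Equiv.swap_apply_of_ne_of_ne n4 hpr, Equiv.swap_apply_of_ne_of_ne n5 hqr,
      Equiv.swap_apply_left] at k3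
  obtain ⟨r, hr⟩ := exists_fresh h0 {P, Q, P', Q'}
  simp only [Finset.mem_insert, Finset.mem_singleton, not_or] at hr
  rw [all P Q r hPQ (Ne.symm hr.1) (Ne.symm hr.2.1),
    all P' Q' r hPQ' (Ne.symm hr.2.2.1) (Ne.symm hr.2.2.2), hSwap_comm P, hSwap_comm P']
  by_cases h : P = P'
  · rw [h]
  · exact all r P P' hr.1 hr.2.2.1 h

/-- The common image of all transpositions. -/
theorem exists_t (h0 : 0 < n) (φ : Houghton n →* Houghton n) (hker : φ.ker ≠ ⊥) :
    ∃ t : Houghton n, t * t = 1 ∧ ∀ l : List (Houghton n),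
      (∀ τ ∈ l, ∃ P Q, P ≠ Q ∧ τ = hSwap P Q) → φ l.prod = t ^ l.length := by
  refine ⟨φ (hAlpha n h0), ?_, fun l => ?_⟩
  · rw [← map_mul, show hAlpha n h0 = hSwap (ray0 n h0, 0) (ray0 n h0, 1) from rfl,
      hSwap_mul_self, map_one]
  · induction l with
    | nil => intro _; simp
    | cons a l ih =>
      intro h
      rw [List.prod_cons, map_mul, ih (fun x hx => h x (List.mem_cons_of_mem _ hx)),
        List.length_cons, pow_succ']
      obtain ⟨P, Q, hPQ, rfl⟩ := h a List.mem_cons_self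
      rw [show hAlpha n h0 = hSwap (ray0 n h0, 0) (ray0 n h0, 1) from rfl,
        swaps_eq h0 φ hker hPQ (show (ray0 n h0, 0) ≠ (ray0 n h0, 1) by simp)]

theorem coe_list {l : List (Houghton n)} (h : ∀ τ ∈ l, ∃ P Q, P ≠ Q ∧ τ = hSwap P Q)
    (he : Even l.length) : ((l.prod : Houghton n) : Equiv.Perm (XH n)) ∈ FAltSub n := by
  refine ⟨l.map (Subtype.val : Houghton n → Equiv.Perm (XH n)), ?_, by simpa using he, ?_⟩
  · intro τ hτ
    obtain ⟨σ, hσ, rfl⟩ := List.mem_map.mp hτ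
    obtain ⟨P, Q, hPQ, rfl⟩ := h σ hσ
    exact ⟨P, Q, hPQ, rfl⟩
  · exact (Subgroup.val_list_prod _ l).symm

/-- Elements of `FAlt` are even products of `hSwap`s. -/
theorem falt_list {g : Houghton n} (h : (g : Equiv.Perm (XH n)) ∈ FAltSub n) :
    ∃ l : List (Houghton n), (∀ τ ∈ l, ∃ P Q, P ≠ Q ∧ τ = hSwap P Q) ∧
      Even l.length ∧ l.prod = g := by
  obtain ⟨l, hl, he, hp⟩ := h
  have hmem : ∀ x ∈ l, x ∈ Houghton n := by
    intro x hx
    obtain ⟨P, Q, _, rfl⟩ := hl x hx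
    exact swap_mem_houghton P Q
  refine ⟨l.attach.map (fun x => ⟨x.1, hmem x.1 x.2⟩), ?_, by simpa using he, ?_⟩
  · intro τ hτ
    obtain ⟨x, _, rfl⟩ := List.mem_map.mp hτ
    obtain ⟨P, Q, hPQ, h⟩ := hl x.1 x.2
    exact ⟨P, Q, hPQ, Subtype.ext h⟩
  · apply Subtype.ext
    rw [Subgroup.val_list_prod, List.map_map, ← hp]
    congr 1
    exact List.attach_map_subtype_val l

theorem fsym_of_sq {t : Houghton n} (h : t * t = 1) : (t : Equiv.Perm (XH n)) ∈ FSymSub n := by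
  apply mem_FSym_of_tv
  have h1 : tv t * tv t = 1 := by rw [← map_mul, h, map_one]
  apply Multiplicative.toAdd.injective
  funext i
  have h2 := congrFun (congrArg Multiplicative.toAdd h1) i
  simp only [toAdd_mul, Pi.add_apply, toAdd_one, Pi.zero_apply] at h2 ⊢
  omega

end Hou

end GRaux

namespace GRaux

section Quot
variable {G : Type*} [Group G] {S : Set G} {N : Subgroup G} [N.Normal]

/-- Words in a quotient lift to words of the same length. -/
theorem lift_word (l : List (G ⧸ N)) (h : IsWord ((QuotientGroup.mk : G → G ⧸ N) '' S) l) :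
    ∃ w : List G, IsWord S w ∧ w.length = l.length ∧ (QuotientGroup.mk w.prod : G ⧸ N) = l.prod := by
  induction l with
  | nil => exact ⟨[], by intro x hx; simp at hx, rfl, by simp⟩
  | cons a l ih =>
    obtain ⟨w, hw, e, hp⟩ := ih (fun x hx => h x (List.mem_cons_of_mem _ hx))
    obtain ⟨s, hs, hsa⟩ : ∃ s : G, (s ∈ S ∨ s⁻¹ ∈ S) ∧ (QuotientGroup.mk s : G ⧸ N) = a := by
      rcases h a List.mem_cons_self with ⟨s, hs, h⟩ | ⟨s, hs, h⟩
      · exact ⟨s, Or.inl hs, h⟩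
      · exact ⟨s⁻¹, Or.inr (by simpa using hs), by rw [QuotientGroup.mk_inv, h, inv_inv]⟩
    refine ⟨s :: w, ?_, by simp [e], ?_⟩
    · intro x hx
      rcases List.mem_cons.mp hx with rfl | hx
      exacts [hs, hw x hx]
    · rw [List.prod_cons, List.prod_cons, QuotientGroup.mk_mul, hsa, hp]

theorem wl_mk_le (hS : Subgroup.closure S = ⊤) (g : G) :
    wordLength ((QuotientGroup.mk : G → G ⧸ N) '' S) (QuotientGroup.mk g) ≤ wordLength S g := by
  obtain ⟨l, hl, e, rfl⟩ := exists_word hS g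
  rw [← e]
  have h1 : (QuotientGroup.mk l.prod : G ⧸ N) = (l.map (QuotientGroup.mk' N)).prod :=
    map_list_prod (QuotientGroup.mk' N) l
  rw [h1]
  refine (wl_le_of_word ?_).trans (by simp)
  intro x hx
  obtain ⟨y, hy, rfl⟩ := List.mem_map.mp hx
  rcases hl y hy with h | h
  · exact Or.inl ⟨y, h, rfl⟩
  · exact Or.inr ⟨y⁻¹, h, rfl⟩

end Quot

end GRaux

open GRaux Filter

/-- Let `n ≥ 2` and let `φ` be an endomorphism of `H_n` with
nontrivial kernel.  Then (i) `φ(FSym_n) ⊆ FSym_n` and `FAlt_n ⊆ ker φ`;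
(ii) writing `φ'` for the induced endomorphism of `FSym_n/FAlt_n` and `φ̄` for
the induced endomorphism of `H_n/FSym_n`, if `φ'` is nontrivial and `φ̄` is
eventually trivial then `GR(φ) = 1`, and otherwise `GR(φ) = GR(φ̄)`. -/
theorem growthRate_of_noninjective_endomorphism
    (n : ℕ) (hn : 2 ≤ n) (h0 : 0 < n)
    [hFN : (FSymIn n).Normal]
    [hAN : ((FAltIn n).subgroupOf (FSymIn n)).Normal]
    (φ : Houghton n →* Houghton n) (hker : φ.ker ≠ ⊥) :
    (∀ g : Houghton n, (g : Equiv.Perm (XH n)) ∈ FSymSub n →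
        ((φ g : Houghton n) : Equiv.Perm (XH n)) ∈ FSymSub n) ∧
    (∀ g : Houghton n, (g : Equiv.Perm (XH n)) ∈ FAltSub n → φ g = 1) ∧
    ∃ (φbar : Houghton n ⧸ FSymIn n →* Houghton n ⧸ FSymIn n)
      (φ' : FSymIn n ⧸ (FAltIn n).subgroupOf (FSymIn n) →*
            FSymIn n ⧸ (FAltIn n).subgroupOf (FSymIn n)),
      (∀ g : Houghton n, φbar (QuotientGroup.mk g) = QuotientGroup.mk (φ g)) ∧
      (∀ g h : FSymIn n, φ (↑g : Houghton n) = (↑h : Houghton n) →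
        φ' (QuotientGroup.mk g) = QuotientGroup.mk h) ∧
      ((φ' ≠ 1 ∧ (∃ k : ℕ, 1 ≤ k ∧ ∀ x, (⇑φbar)^[k] x = 1)) →
        growthRate (houghtonGenSet n h0) φ = 1) ∧
      (¬(φ' ≠ 1 ∧ (∃ k : ℕ, 1 ≤ k ∧ ∀ x, (⇑φbar)^[k] x = 1)) →
        growthRate (houghtonGenSet n h0) φ =
          growthRate (QuotientGroup.mk '' houghtonGenSet n h0) φbar) := by
  classical
  obtain ⟨t, htt, ht⟩ := exists_t h0 φ hker
  have hpow : ∀ k : ℕ, t ^ k = if Even k then 1 else t := by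
    intro k
    split_ifs with h
    · obtain ⟨r, rfl⟩ := h
      rw [← two_mul, pow_mul, pow_two, htt, one_pow]
    · obtain ⟨r, rfl⟩ := Nat.not_even_iff_odd.mp h
      rw [pow_succ, pow_mul, pow_two, htt, one_pow, one_mul]
  have htF : (t : Equiv.Perm (XH n)) ∈ FSymSub n := fsym_of_sq htt
  have hval : ∀ g : Houghton n, (g : Equiv.Perm (XH n)) ∈ FSymSub n → φ g = 1 ∨ φ g = t := by
    intro g hg
    obtain ⟨l, hl, rfl⟩ := fsym_list hg
    rw [ht l hl, hpow]
    split_ifs <;> simp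
  have hodd : ∀ g : Houghton n, (g : Equiv.Perm (XH n)) ∈ FSymSub n →
      (g : Equiv.Perm (XH n)) ∉ FAltSub n → φ g = t := by
    intro g hg hg'
    obtain ⟨l, hl, rfl⟩ := fsym_list hg
    rw [ht l hl, hpow, if_neg]
    exact fun he => hg' (coe_list hl he)
  have hA : ∀ g : Houghton n, (g : Equiv.Perm (XH n)) ∈ FSymSub n →
      ((φ g : Houghton n) : Equiv.Perm (XH n)) ∈ FSymSub n := by
    intro g hg
    rcases hval g hg with h | h
    · rw [h]; exact (FSymSub n).one_mem
    · rw [h]; exact htF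
  have hB : ∀ g : Houghton n, (g : Equiv.Perm (XH n)) ∈ FAltSub n → φ g = 1 := by
    intro g hg
    obtain ⟨l, hl, he, rfl⟩ := falt_list hg
    rw [ht l hl, hpow, if_pos he]
  refine ⟨hA, hB, ?_⟩
  -- the induced maps
  let ψ : FSymIn n →* FSymIn n := (φ.comp (FSymIn n).subtype).codRestrict (FSymIn n)
    (fun x => hA x.1 x.2)
  have hψ : (FAltIn n).subgroupOf (FSymIn n) ≤ ((FAltIn n).subgroupOf (FSymIn n)).comap ψ := by
    intro x hx
    show ((φ x.1 : Houghton n) : Equiv.Perm (XH n)) ∈ FAltSub n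
    rw [hB x.1 hx]
    exact (FAltSub n).one_mem
  have hφF : FSymIn n ≤ (FSymIn n).comap φ := fun x hx => hA x hx
  obtain ⟨φbar, hbar⟩ : ∃ φbar : Houghton n ⧸ FSymIn n →* Houghton n ⧸ FSymIn n,
      ∀ g : Houghton n, φbar (QuotientGroup.mk g) = QuotientGroup.mk (φ g) :=
    ⟨QuotientGroup.map _ _ φ hφF, fun g => rfl⟩
  obtain ⟨φ', hφ'⟩ : ∃ φ' : FSymIn n ⧸ (FAltIn n).subgroupOf (FSymIn n) →*
        FSymIn n ⧸ (FAltIn n).subgroupOf (FSymIn n),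
      ∀ g h : FSymIn n, φ (↑g : Houghton n) = (↑h : Houghton n) →
        φ' (QuotientGroup.mk g) = QuotientGroup.mk h :=
    ⟨QuotientGroup.map _ _ ψ hψ, fun g h e =>
      congrArg QuotientGroup.mk (Subtype.ext e : ψ g = h)⟩
  refine ⟨φbar, φ', hbar, hφ', ?_⟩
  have hS := closure_genset hn h0
  have hfin := finite_genset (n := n) h0
  have hS' : Subgroup.closure ((QuotientGroup.mk : Houghton n → Houghton n ⧸ FSymIn n) ''
      houghtonGenSet n h0) = ⊤ := by
    have := MonoidHom.map_closure (QuotientGroup.mk' (FSymIn n)) (houghtonGenSet n h0)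
    rw [hS, Subgroup.map_top_of_surjective _ (QuotientGroup.mk'_surjective _)] at this
    exact this.symm
  have hfin' := hfin.image (QuotientGroup.mk : Houghton n → Houghton n ⧸ FSymIn n)
  have hiter : ∀ (k : ℕ) (g : Houghton n),
      (⇑φbar)^[k] (QuotientGroup.mk g) = QuotientGroup.mk ((⇑φ)^[k] g) := by
    intro k g
    induction k with
    | zero => rfl
    | succ k ih => rw [Function.iterate_succ_apply', ih, hbar, Function.iterate_succ_apply']
  -- if `φbar^k = 1` then `φ^k` takes values in `FSym`
  have hnil : ∀ k : ℕ, (∀ x, (⇑φbar)^[k] x = 1) → ∀ g : Houghton n,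
      (((⇑φ)^[k] g : Houghton n) : Equiv.Perm (XH n)) ∈ FSymSub n := by
    intro k hk g
    have := hk (QuotientGroup.mk g)
    rw [hiter, QuotientGroup.eq_one_iff] at this
    exact this
  constructor
  · rintro ⟨hne, k, hk1, hk⟩
    obtain ⟨g, hg, hgA⟩ : ∃ g : Houghton n, (g : Equiv.Perm (XH n)) ∈ FSymSub n ∧
        ((φ g : Houghton n) : Equiv.Perm (XH n)) ∉ FAltSub n := by
      by_contra hc
      push Not at hc
      apply hne
      ext x
      show φ' (QuotientGroup.mk x) = 1
      rw [hφ' x ⟨φ x.1, hA x.1 x.2⟩ rfl, QuotientGroup.eq_one_iff]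
      exact hc x.1 x.2
    have hgt : φ g = t := by
      rcases hval g hg with h | h
      · rw [h] at hgA; exact absurd (FAltSub n).one_mem hgA
      · exact h
    rw [hgt] at hgA
    have htφ : φ t = t := hodd t htF hgA
    have ht1 : t ≠ 1 := by
      rintro rfl
      exact hgA (FAltSub n).one_mem
    have hconst : ∀ j, (⇑φ)^[j] t = t := fun j => Function.iterate_fixed htφ j
    apply le_antisymm
    · rw [growthRate_eq]
      apply ciSup_le
      intro x
      apply limsup_le_of _ (wordLength (houghtonGenSet n h0) t) 1
        (by exact_mod_cast wl_pos hS ht1) (by norm_num)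
      filter_upwards [eventually_ge_atTop (k + 1)] with j hj
      obtain ⟨i, rfl⟩ := Nat.exists_eq_add_of_le hj
      have h1 : (⇑φ)^[k + 1 + i] x = 1 ∨ (⇑φ)^[k + 1 + i] x = t := by
        rw [add_comm, Function.iterate_add_apply, Function.iterate_succ_apply']
        rcases hval _ (hnil k hk x) with h | h
        · left; rw [h, iterate_map_one]
        · right; rw [h, hconst]
      rw [one_pow, mul_one, Nat.cast_le]
      unfold lseq
      rcases h1 with h | h
      · rw [h, wl_one]; exact Nat.zero_le _
      · rw [h]
    · refine le_trans ?_ (le_gr hS hfin φ t)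
      refine one_le_limsup _ (sq_bdd hS hfin φ t) (Eventually.of_forall fun j => ?_)
      unfold lseq
      rw [hconst]
      exact wl_pos hS ht1
  · intro hcase
    by_cases hev : ∃ k : ℕ, 1 ≤ k ∧ ∀ x, (⇑φbar)^[k] x = 1
    · -- both are eventually trivial
      have hφ1 : φ' = 1 := by
        by_contra hc
        exact hcase ⟨hc, hev⟩
      obtain ⟨k, hk1, hk⟩ := hev
      rw [gr_eq_zero φbar k hk]
      apply gr_eq_zero φ (k + 2)
      intro x
      rw [Function.iterate_succ_apply', Function.iterate_succ_apply']
      apply hB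
      have h1 := hnil k hk x
      have h2 := hφ' ⟨_, h1⟩ ⟨_, hA _ h1⟩ rfl
      rw [hφ1, MonoidHom.one_apply, eq_comm, QuotientGroup.eq_one_iff] at h2
      exact h2
    · have hR := one_le_gr hS' hfin' φbar hev
      apply le_antisymm
      · rw [growthRate_eq]
        apply ciSup_le
        intro g
        apply le_of_forall_pos_le_add
        intro ε hε
        set R := growthRate (QuotientGroup.mk '' houghtonGenSet n h0) φbar with hRdef
        obtain ⟨M, hM1, hM⟩ := wl_map_word hS hfin φ
        set c := wordLength (houghtonGenSet n h0) t with hc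
        -- key estimate
        have key : ∀ k, lseq (houghtonGenSet n h0) φ g (k + 1) ≤
            M * lseq (QuotientGroup.mk '' houghtonGenSet n h0) φbar (QuotientGroup.mk g) k + c := by
          intro k
          obtain ⟨l, hl, he, hp⟩ := exists_word hS' ((⇑φbar)^[k] (QuotientGroup.mk g))
          obtain ⟨w, hw, hwl, hwp⟩ := lift_word (N := FSymIn n) l hl
          unfold lseq
          rw [Function.iterate_succ_apply', ← he, ← hwl]
          have hf : w.prod⁻¹ * (⇑φ)^[k] g ∈ FSymIn n := by
            rw [← QuotientGroup.eq, hwp, hp, hiter]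
          have e1 : φ ((⇑φ)^[k] g) = φ w.prod * φ (w.prod⁻¹ * (⇑φ)^[k] g) := by
            rw [← map_mul, mul_inv_cancel_left]
          rw [e1]
          refine (wl_mul hS _ _).trans (Nat.add_le_add (hM w hw) ?_)
          rcases hval (w.prod⁻¹ * (⇑φ)^[k] g) hf with h | h
          · rw [h, wl_one]; exact Nat.zero_le _
          · rw [h]
        have hlim : limsup (rt (lseq (QuotientGroup.mk '' houghtonGenSet n h0) φbar
            (QuotientGroup.mk g))) atTop < R + ε :=
          lt_of_le_of_lt (le_gr hS' hfin' φbar (QuotientGroup.mk g)) (by linarith)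
        have hevt := eventually_lt_of_limsup_lt hlim (sq_bdd hS' hfin' φbar _)
        have hL1 : 1 ≤ R + ε := by linarith
        apply limsup_le_of _ (M + c) (R + ε) (by positivity) (by linarith)
        have hev2 : ∀ᶠ k in atTop, (lseq (houghtonGenSet n h0) φ g (k + 1) : ℝ) ≤
            (M + c) * (R + ε) ^ (k + 1) := by
          filter_upwards [hevt, eventually_ge_atTop 1] with k hk hk1
          have hb : (lseq (QuotientGroup.mk '' houghtonGenSet n h0) φbar
              (QuotientGroup.mk g) k : ℝ) ≤ (R + ε) ^ k := by
            have := pow_le_pow_left₀ (rt_nonneg _ k) hk.le k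
            unfold rt at this
            rwa [one_div, Real.rpow_inv_natCast_pow (Nat.cast_nonneg _) (by omega)] at this
          have hkey : (lseq (houghtonGenSet n h0) φ g (k + 1) : ℝ) ≤
            M * lseq (QuotientGroup.mk '' houghtonGenSet n h0) φbar (QuotientGroup.mk g) k + c := by
            exact_mod_cast key k
          have h1 : (R + ε) ^ k ≤ (R + ε) ^ (k + 1) := pow_le_pow_right₀ hL1 (by omega)
          have h2 : 1 ≤ (R + ε) ^ (k + 1) := one_le_pow₀ hL1
          have h3 : (M : ℝ) * lseq (QuotientGroup.mk '' houghtonGenSet n h0) φbar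
              (QuotientGroup.mk g) k ≤ M * (R + ε) ^ (k + 1) :=
            mul_le_mul_of_nonneg_left (hb.trans h1) (Nat.cast_nonneg _)
          have h4 : (c : ℝ) * 1 ≤ c * (R + ε) ^ (k + 1) :=
            mul_le_mul_of_nonneg_left h2 (Nat.cast_nonneg _)
          linarith
        obtain ⟨K, hK⟩ := eventually_atTop.mp hev2
        filter_upwards [eventually_ge_atTop (K + 1)] with k hk
        obtain ⟨j, rfl⟩ : ∃ j, k = j + 1 := ⟨k - 1, by omega⟩
        exact hK j (by omega)
      · rw [growthRate_eq φbar]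
        apply ciSup_le
        intro q
        obtain ⟨g, rfl⟩ := QuotientGroup.mk_surjective q
        refine le_trans ?_ (le_gr hS hfin φ g)
        refine limsup_le_limsup ?_ (cob _) (sq_bdd hS hfin φ g)
        refine Eventually.of_forall fun k => ?_
        unfold rt lseq
        refine Real.rpow_le_rpow (Nat.cast_nonneg _) (Nat.cast_le.mpr ?_) (by positivity)
        rw [hiter]
        exact wl_mk_le hS _
end

section
/- For every n ≥ 3 and every automorphism φ of Houghton's group H_n, the growth rate GR(φ) equals 1. -/
section WL
variable {G : Type*} [Group G] {S : Set G}

theorem wl_spec (hS : Subgroup.closure S = ⊤) (g : G) :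
    ∃ l : List G, (∀ x ∈ l, x ∈ S ∨ x⁻¹ ∈ S) ∧ l.length = wordLength S g ∧ l.prod = g := by
  have : {k | ∃ l : List G, (∀ x ∈ l, x ∈ S ∨ x⁻¹ ∈ S) ∧ l.length = k ∧ l.prod = g}.Nonempty := by
    have hg : g ∈ (Subgroup.closure S).toSubmonoid := by rw [hS]; trivial
    rw [Subgroup.closure_toSubmonoid] at hg
    obtain ⟨l, h1, h2⟩ := Submonoid.exists_list_of_mem_closure hg
    exact ⟨l.length, l, fun x hx => h1 x hx, rfl, h2⟩
  exact Nat.sInf_mem this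

theorem wl_mul (hS : Subgroup.closure S = ⊤) (a b : G) :
    wordLength S (a * b) ≤ wordLength S a + wordLength S b := by
  obtain ⟨l, h1, h2, h3⟩ := wl_spec hS a
  obtain ⟨l', h1', h2', h3'⟩ := wl_spec hS b
  refine Nat.sInf_le ⟨l ++ l', ?_, by simp [h2, h2'], by simp [h3, h3']⟩
  intro x hx
  rcases List.mem_append.mp hx with h | h
  exacts [h1 x h, h1' x h]

theorem wl_inv (hS : Subgroup.closure S = ⊤) (a : G) :
    wordLength S (a⁻¹) ≤ wordLength S a := by
  obtain ⟨l, h1, h2, h3⟩ := wl_spec hS a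
  refine Nat.sInf_le ⟨(l.map fun x => x⁻¹).reverse, ?_, by simp [h2],
    by rw [← List.prod_inv_reverse, h3]⟩
  intro x hx
  rw [List.mem_reverse, List.mem_map] at hx
  obtain ⟨y, hy, rfl⟩ := hx
  rw [inv_inv]
  exact (h1 y hy).symm

theorem wl_one : wordLength S (1 : G) = 0 :=
  Nat.le_zero.mp (Nat.sInf_le ⟨[], by simp, by simp, by simp⟩)

theorem wl_pos (hS : Subgroup.closure S = ⊤) {a : G} (ha : a ≠ 1) : 1 ≤ wordLength S a := by
  by_contra h
  obtain ⟨l, h1, h2, h3⟩ := wl_spec hS a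
  have : l = [] := by rw [← List.length_eq_zero_iff]; omega
  subst this
  exact ha (by simpa using h3.symm)

theorem wl_pow (hS : Subgroup.closure S = ⊤) (a : G) (k : ℕ) :
    wordLength S (a ^ k) ≤ k * wordLength S a := by
  induction k with
  | zero => simp [wl_one]
  | succ k ih =>
    rw [pow_succ]
    have := wl_mul hS (a ^ k) a
    rw [Nat.succ_mul]; omega

theorem growth_aux (hS : Subgroup.closure S = ⊤) [Nontrivial G] (φ : G ≃* G) (N : ℕ) (hN : 0 < N)
    (h : G) (hφ : ∀ g, (⇑φ)^[N] g = h * g * h⁻¹) :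
    growthRate S φ.toMonoidHom = 1 := by
  have hq : ∀ q g, (⇑φ)^[N * q] g = h ^ q * g * (h ^ q)⁻¹ := by
    intro q
    induction q with
    | zero => simp
    | succ q ih =>
      intro g
      rw [Nat.mul_succ, Function.iterate_add_apply, hφ, ih]
      group
  have hbd : ∀ g : G, ∃ D : ℕ, 0 < D ∧ ∀ k, 1 ≤ k → wordLength S ((⇑φ)^[k] g) ≤ D * k := by
    intro g
    refine ⟨2 * wordLength S h + ∑ r ∈ Finset.range N, wordLength S ((⇑φ)^[r] g) + 1,
      by omega, fun k hk => ?_⟩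
    have e : (⇑φ)^[k] g = h ^ (k / N) * (⇑φ)^[k % N] g * (h ^ (k / N))⁻¹ := by
      rw [← hq, ← Function.iterate_add_apply, Nat.div_add_mod]
    have h1 := wl_mul hS (h ^ (k / N) * (⇑φ)^[k % N] g) (h ^ (k / N))⁻¹
    have h2 := wl_mul hS (h ^ (k / N)) ((⇑φ)^[k % N] g)
    have h3 := wl_inv hS (h ^ (k / N))
    have h4 := wl_pow hS h (k / N)
    have h5 : wordLength S ((⇑φ)^[k % N] g) ≤
        ∑ r ∈ Finset.range N, wordLength S ((⇑φ)^[r] g) :=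
      Finset.single_le_sum (f := fun r => wordLength S ((⇑φ)^[r] g)) (fun _ _ => Nat.zero_le _)
        (Finset.mem_range.mpr (Nat.mod_lt _ hN))
    have h6 : k / N ≤ k := Nat.div_le_self _ _
    have h7 : k / N * wordLength S h ≤ k * wordLength S h := Nat.mul_le_mul_right _ h6
    rw [← e] at h1
    generalize (∑ r ∈ Finset.range N, wordLength S ((⇑φ)^[r] g)) = s at *
    nlinarith
  have hlim : ∀ g : G, g ≠ 1 → Filter.limsup
    (fun k : ℕ => (wordLength S ((⇑φ.toMonoidHom)^[k] g) : ℝ) ^ (1 / (k : ℝ))) Filter.atTop = 1 := by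
    intro g hg
    apply Filter.Tendsto.limsup_eq
    obtain ⟨D, hD, hb⟩ := hbd g
    have hD' : (0:ℝ) < D := by exact_mod_cast hD
    have t : Filter.Tendsto (fun k : ℕ => ((D : ℝ) * k) ^ ((D:ℝ) / (1 * ((D : ℝ) * k) + 0)))
        Filter.atTop (nhds 1) :=
      (tendsto_rpow_div_mul_add (D:ℝ) 1 0 (by norm_num)).comp
        (tendsto_natCast_atTop_atTop.const_mul_atTop hD')
    refine tendsto_of_tendsto_of_tendsto_of_le_of_le' tendsto_const_nhds t ?_ ?_
    · filter_upwards [Filter.eventually_ge_atTop 1] with k hk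
      apply Real.one_le_rpow
      · have : (⇑φ)^[k] g ≠ 1 := by
          intro hc
          apply hg
          have h1 : (⇑φ)^[k] 1 = 1 := Function.iterate_fixed (map_one φ) k
          exact (φ.injective.iterate k) (hc.trans h1.symm)
        exact_mod_cast wl_pos hS this
      · positivity
    · filter_upwards [Filter.eventually_ge_atTop 1] with k hk
      have hk' : (0:ℝ) < k := by exact_mod_cast hk
      have : (D:ℝ) / (1 * ((D : ℝ) * k) + 0) = 1 / k := by field_simp; ring
      rw [this]
      apply Real.rpow_le_rpow (by positivity)
      · exact_mod_cast hb k hk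
      · positivity
  have hone : Filter.limsup
    (fun k : ℕ => (wordLength S ((⇑φ.toMonoidHom)^[k] (1:G)) : ℝ) ^ (1 / (k : ℝ))) Filter.atTop = 0 := by
    apply Filter.Tendsto.limsup_eq
    apply tendsto_const_nhds.congr'
    filter_upwards [Filter.eventually_ge_atTop 1] with k hk
    have h1 : (⇑φ.toMonoidHom)^[k] (1:G) = 1 := Function.iterate_fixed (map_one φ) k
    have hk' : (k:ℝ) ≠ 0 := by positivity
    rw [h1, wl_one, Nat.cast_zero, Real.zero_rpow (by positivity)]
  have hle : ∀ g : G, Filter.limsup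
    (fun k : ℕ => (wordLength S ((⇑φ.toMonoidHom)^[k] g) : ℝ) ^ (1 / (k : ℝ))) Filter.atTop ≤ 1 := by
    intro g
    by_cases hg : g = 1
    · subst hg; rw [hone]; norm_num
    · rw [hlim g hg]
  unfold growthRate
  apply le_antisymm
  · exact ciSup_le hle
  · obtain ⟨g, hg⟩ := exists_ne (1 : G)
    refine (hlim g hg).symm.trans_le ?_
    exact le_ciSup (f := fun g : G => Filter.limsup
      (fun k : ℕ => (wordLength S ((⇑φ.toMonoidHom)^[k] g) : ℝ) ^ (1 / (k : ℝ))) Filter.atTop)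
      ⟨1, by rintro _ ⟨g, rfl⟩; exact hle g⟩ g
end WL

open Filter

section Cof
variable {n : ℕ}

theorem cof_of_rays {P : XH n → Prop} (h : ∀ j, ∀ᶠ p in atTop, P (j, p)) :
    ∀ᶠ x in cofinite, P x := by
  rw [eventually_cofinite]
  have : {x | ¬ P x} ⊆ ⋃ j : Fin n, (fun p => (j, p)) '' {p | ¬ P (j, p)} := by
    rintro ⟨j, p⟩ hx
    exact Set.mem_iUnion.mpr ⟨j, p, hx, rfl⟩
  refine Set.Finite.subset (Set.finite_iUnion fun j => Set.Finite.image _ ?_) this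
  have := h j
  rwa [← Nat.cofinite_eq_atTop, eventually_cofinite] at this

theorem rays_of_cof {P : XH n → Prop} (h : ∀ᶠ x in cofinite, P x) (j : Fin n) :
    ∀ᶠ p in atTop, P (j, p) := by
  rw [← Nat.cofinite_eq_atTop]
  exact (Function.Injective.tendsto_cofinite (Prod.mk_right_injective j)).eventually h

theorem cof_comp {P : XH n → Prop} (h : ∀ᶠ x in cofinite, P x) (g : Equiv.Perm (XH n)) :
    ∀ᶠ x in cofinite, P (g x) :=
  g.injective.tendsto_cofinite.eventually h

theorem htv_iff {g : Equiv.Perm (XH n)} {m : Fin n → ℤ} :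
    HasTranslationVector g m ↔
      ∀ᶠ x in cofinite, (g x).1 = x.1 ∧ ((g x).2 : ℤ) = (x.2 : ℤ) + m x.1 := by
  constructor
  · rintro ⟨K, hK⟩
    rw [eventually_cofinite]
    refine K.finite_toSet.subset fun x hx => ?_
    by_contra hc
    exact hx (hK x hc)
  · intro h
    rw [eventually_cofinite] at h
    refine ⟨h.toFinset, fun x hx => ?_⟩
    by_contra hc
    exact hx (h.mem_toFinset.mpr hc)

theorem htv_one : HasTranslationVector (1 : Equiv.Perm (XH n)) 0 :=
  ⟨∅, fun x _ => by simp⟩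

theorem htv_mul {a b : Equiv.Perm (XH n)} {m k : Fin n → ℤ} (ha : HasTranslationVector a m)
    (hb : HasTranslationVector b k) : HasTranslationVector (a * b) (m + k) := by
  rw [htv_iff] at *
  filter_upwards [hb, cof_comp ha b] with x h1 h2
  refine ⟨by rw [Equiv.Perm.mul_apply, h2.1, h1.1], ?_⟩
  rw [Equiv.Perm.mul_apply, h2.2, h1.2, h1.1, Pi.add_apply]; ring

theorem htv_inv {a : Equiv.Perm (XH n)} {m : Fin n → ℤ} (ha : HasTranslationVector a m) :
    HasTranslationVector a⁻¹ (-m) := by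
  rw [htv_iff] at *
  filter_upwards [cof_comp ha a⁻¹] with x h
  rw [show a (a⁻¹ x) = x from a.apply_symm_apply x] at h
  refine ⟨h.1.symm, ?_⟩
  rw [Pi.neg_apply, h.1]; omega

theorem htv_uniq {a : Equiv.Perm (XH n)} {m k : Fin n → ℤ} (h1 : HasTranslationVector a m)
    (h2 : HasTranslationVector a k) : m = k := by
  rw [htv_iff] at *
  ext j
  obtain ⟨p, h, h'⟩ := (rays_of_cof (h1.and h2) j).exists
  have := h.2; have := h'.2
  simp only at *
  omega

end Cof

section Conj
open Equiv
variable {n : ℕ}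

theorem mem_htv (g : Houghton n) : ∃ m, HasTranslationVector (g : Perm (XH n)) m := g.2

/-- An involution in `H_n` has a fixed point. -/
theorem invol_fix (h0 : 0 < n) (t : Houghton n) (ht : t * t = 1) :
    ∃ c, (t : Perm (XH n)) c = c := by
  obtain ⟨m, hm⟩ := mem_htv t
  have h2 := htv_mul hm hm
  have e : (t : Perm (XH n)) * t = 1 := by
    have := congrArg (Subtype.val) ht
    simpa using this
  rw [e] at h2
  have h3 := htv_uniq h2 htv_one
  rw [htv_iff] at hm
  obtain ⟨p, h⟩ := (rays_of_cof hm ⟨0, h0⟩).exists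
  refine ⟨(⟨0, h0⟩, p), Prod.ext h.1 ?_⟩
  have h4 := congrFun h3 ⟨0, h0⟩
  have h5 := h.2
  simp only [Pi.add_apply, Pi.zero_apply] at *
  omega

theorem invol_swap {α : Type*} [DecidableEq α] (t : Perm α) (h1 : t ≠ 1) (h2 : t * t = 1)
    (c : α) (hc : t c = c)
    (H : ∀ a b d : α, a ≠ b → ∀ e f : α,
      let g : Perm α := swap a b * swap b d * swap d e * swap e f
      (t * (g * t * g⁻¹)) ^ 6 = 1) : t.IsSwap := by
  have tt : ∀ x, t (t x) = x := fun x => by rw [← Perm.mul_apply, h2]; rfl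
  have : ∃ a, t a ≠ a := by
    by_contra hh
    push Not at hh
    exact h1 (Equiv.ext hh)
  obtain ⟨a, ha⟩ := this
  refine ⟨a, t a, ha.symm, ?_⟩
  by_contra hne
  have : ∃ b, t b ≠ swap a (t a) b := by
    by_contra hh
    push Not at hh
    exact hne (Equiv.ext hh)
  obtain ⟨b, hb⟩ := this
  have hba : b ≠ a := by rintro rfl; exact hb (by simp)
  have hbta : b ≠ t a := by rintro rfl; exact hb (by simp [tt])
  rw [swap_apply_of_ne_of_ne hba hbta] at hb
  have q1 : t b ≠ a := by intro h; apply hbta; rw [← h, tt]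
  have q2 : t b ≠ t a := fun h => hba (t.injective h)
  have q3 : c ≠ a := by rintro rfl; exact ha hc
  have q4 : c ≠ b := by rintro rfl; exact hb hc
  have q5 : c ≠ t a := by rintro rfl; rw [tt] at hc; exact ha hc.symm
  have q6 : c ≠ t b := by rintro rfl; rw [tt] at hc; exact hb hc.symm
  obtain ⟨g, hg⟩ : ∃ g : Perm α, g = swap a (t a) * swap (t a) b * swap b (t b) * swap (t b) c :=
    ⟨_, rfl⟩
  have hH : (t * (g * t * g⁻¹)) ^ 6 = 1 := by
    rw [hg]; exact H a (t a) b ha.symm (t b) c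
  have g1 : g a = t a := by
    simp only [hg, Perm.mul_apply, swap_apply_def]; grind
  have g2 : g (t a) = b := by
    simp only [hg, Perm.mul_apply, swap_apply_def]; grind
  have g3 : g b = t b := by
    simp only [hg, Perm.mul_apply, swap_apply_def]; grind
  have g4 : g (t b) = c := by
    simp only [hg, Perm.mul_apply, swap_apply_def]; grind
  have g5 : g c = a := by
    simp only [hg, Perm.mul_apply, swap_apply_def]; grind
  have i1 : g⁻¹ (t a) = a := by rw [← g1]; simp
  have i2 : g⁻¹ b = t a := by rw [← g2]; simp
  have i3 : g⁻¹ (t b) = b := by rw [← g3]; simp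
  have i4 : g⁻¹ c = t b := by rw [← g4]; simp
  have i5 : g⁻¹ a = c := by rw [← g5]; simp
  have s1 : (t * (g * t * g⁻¹)) c = b := by
    simp only [Perm.mul_apply, i4, tt, g3]
  have s2 : (t * (g * t * g⁻¹)) b = a := by
    simp only [Perm.mul_apply, i2, tt, g1]
  have s3 : (t * (g * t * g⁻¹)) a = t a := by
    simp only [Perm.mul_apply, i5, hc, g5]
  have s4 : (t * (g * t * g⁻¹)) (t a) = t b := by
    simp only [Perm.mul_apply, i1, g2]
  have s5 : (t * (g * t * g⁻¹)) (t b) = c := by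
    simp only [Perm.mul_apply, i3, g4, hc]
  generalize t * (g * t * g⁻¹) = w at *
  have := congrArg (fun f : Perm α => f c) hH
  simp only [pow_succ, pow_zero, one_mul, Perm.mul_apply, s1, s2, s3, s4, s5, Perm.one_apply] at this
  exact q4 this.symm

theorem swap_swap_pow_aux {α : Type*} [DecidableEq α] (a b c : α) :
    (swap a b * swap a c) ^ 6 = 1 := by
  by_cases hab : a = b
  · subst hab
    rw [swap_self]
    change (1 * swap a c) ^ 6 = 1
    rw [one_mul, show 6 = 2 * 3 from rfl, pow_mul, pow_two, swap_mul_self, one_pow]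
  by_cases hac : a = c
  · subst hac
    rw [swap_self]
    change (swap a b * 1) ^ 6 = 1
    rw [mul_one, show 6 = 2 * 3 from rfl, pow_mul, pow_two, swap_mul_self, one_pow]
  by_cases hbc : b = c
  · subst hbc
    rw [swap_mul_self, one_pow]
  have e1 : swap a b * swap a c * swap a b = swap b c := by
    have := swap_apply_apply (swap a b) a c
    rw [swap_apply_left, swap_apply_of_ne_of_ne (Ne.symm hac) (Ne.symm hbc), swap_inv] at this
    exact this.symm
  have e2 : swap a c * swap a b * swap a c = swap b c := by
    have := swap_apply_apply (swap a c) a b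
    rw [swap_apply_left, swap_apply_of_ne_of_ne (Ne.symm hab) hbc, swap_inv] at this
    rw [← this, swap_comm]
  have e3 : (swap a b * swap a c) ^ 3 =
      (swap a b * swap a c * swap a b) * (swap a c * swap a b * swap a c) := by
    simp only [pow_succ, pow_zero, one_mul, mul_assoc]
  rw [show 6 = 3 * 2 from rfl, pow_mul, e3, e1, e2, swap_mul_self, one_pow]

theorem swap_swap_pow {α : Type*} [DecidableEq α] (a b c d : α) :
    (swap a b * swap c d) ^ 6 = 1 := by
  by_cases h1 : a = c
  · subst h1; exact swap_swap_pow_aux _ _ _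
  by_cases h2 : a = d
  · subst h2; rw [swap_comm c]; exact swap_swap_pow_aux _ _ _
  by_cases h3 : b = c
  · subst h3; rw [swap_comm a]; exact swap_swap_pow_aux _ _ _
  by_cases h4 : b = d
  · subst h4; rw [swap_comm a, swap_comm c]; exact swap_swap_pow_aux _ _ _
  have e : swap a b * swap c d = swap c d * swap a b := by
    have := mul_swap_eq_swap_mul (swap a b) c d
    rwa [swap_apply_of_ne_of_ne (Ne.symm h1) (Ne.symm h3),
      swap_apply_of_ne_of_ne (Ne.symm h2) (Ne.symm h4)] at this
  have hc : Commute (swap a b) (swap c d) := e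
  rw [hc.mul_pow, show 6 = 2 * 3 from rfl, pow_mul, pow_mul, pow_two, pow_two, swap_mul_self,
    swap_mul_self, one_pow, one_mul]

theorem hswap_conj (g : Houghton n) (x y : XH n) :
    g * hSwap x y * g⁻¹ = hSwap ((g : Perm (XH n)) x) ((g : Perm (XH n)) y) := by
  apply Subtype.ext
  exact (swap_apply_apply (g : Perm (XH n)) x y).symm

theorem hswap_ne_one {x y : XH n} (h : x ≠ y) : hSwap x y ≠ 1 := by
  intro hc
  have : swap x y = 1 := congrArg Subtype.val hc
  exact h (swap_eq_one_iff.mp this)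

theorem hswap_sq (x y : XH n) : hSwap x y * hSwap x y = 1 :=
  Subtype.ext (swap_mul_self x y)

/-- An automorphism sends transpositions to transpositions. -/
theorem map_hswap (h0 : 0 < n) (φ : Houghton n ≃* Houghton n) {x y : XH n} (hxy : x ≠ y) :
    ∃ a b, a ≠ b ∧ φ (hSwap x y) = hSwap a b := by
  have hsq : φ (hSwap x y) * φ (hSwap x y) = 1 := by rw [← map_mul, hswap_sq, map_one]
  obtain ⟨c, hc⟩ := invol_fix h0 _ hsq
  have hne : φ (hSwap x y) ≠ 1 := by
    intro h
    exact hswap_ne_one hxy (φ.injective (h.trans (map_one φ).symm))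
  have : (φ (hSwap x y) : Perm (XH n)).IsSwap := by
    refine invol_swap _ (fun h => hne (Subtype.ext h)) (congrArg Subtype.val hsq) c hc ?_
    intro a b d _ e f g
    let g' : Houghton n := hSwap a b * hSwap b d * hSwap d e * hSwap e f
    obtain ⟨k, hk⟩ := φ.surjective g'
    have key : (φ (hSwap x y) * (g' * φ (hSwap x y) * g'⁻¹)) ^ 6 = 1 := by
      rw [← hk, ← map_inv, ← map_mul, ← map_mul, ← map_mul, ← map_pow, hswap_conj]
      have : (hSwap x y * hSwap ((k : Perm (XH n)) x) ((k : Perm (XH n)) y)) ^ 6 = 1 :=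
        Subtype.ext (swap_swap_pow _ _ _ _)
      rw [this, map_one]
    exact congrArg Subtype.val key
  obtain ⟨a, b, hab, h⟩ := this
  exact ⟨a, b, hab, Subtype.ext h⟩

theorem swap_eq_cases {α : Type*} [DecidableEq α] {a b c d : α} (hab : a ≠ b)
    (h : swap a b = swap c d) : (a = c ∧ b = d) ∨ (a = d ∧ b = c) := by
  have h1 : swap c d a = b := by rw [← h]; simp
  have h2 : swap c d b = a := by rw [← h]; simp
  rw [swap_apply_def] at h1 h2
  grind

theorem hswap_eq_cases {a b c d : XH n} (hab : a ≠ b)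
    (h : hSwap a b = hSwap c d) : (a = c ∧ b = d) ∨ (a = d ∧ b = c) :=
  swap_eq_cases hab (congrArg Subtype.val h)

theorem hswap_comm (a b : XH n) : hSwap a b = hSwap b a := Subtype.ext (swap_comm a b)

theorem hswap_braid {a b c : XH n} (hac : a ≠ c) (hbc : b ≠ c) :
    hSwap a b * hSwap a c * hSwap a b = hSwap b c := by
  have := hswap_conj (hSwap a b) a c
  have e : (hSwap a b)⁻¹ = hSwap a b := by
    rw [inv_eq_iff_mul_eq_one]; exact hswap_sq a b
  rw [e] at this
  rw [this]
  change hSwap (swap a b a) (swap a b c) = _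
  rw [swap_apply_left, swap_apply_of_ne_of_ne (Ne.symm hac) (Ne.symm hbc)]

theorem hswap_commute {a b c d : XH n} (h1 : a ≠ c) (h2 : a ≠ d) (h3 : b ≠ c) (h4 : b ≠ d) :
    hSwap a b * hSwap c d = hSwap c d * hSwap a b := by
  apply Subtype.ext
  have := mul_swap_eq_swap_mul (swap a b) c d
  rwa [swap_apply_of_ne_of_ne (Ne.symm h1) (Ne.symm h3),
      swap_apply_of_ne_of_ne (Ne.symm h2) (Ne.symm h4)] at this

/-- Images of two distinct transpositions sharing a point share exactly one point. -/
theorem map_two (h0 : 0 < n) (φ : Houghton n ≃* Houghton n) {x y z : XH n} (hxy : x ≠ y)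
    (hxz : x ≠ z) (hyz : y ≠ z) :
    ∃ a b c, a ≠ b ∧ a ≠ c ∧ b ≠ c ∧ φ (hSwap x y) = hSwap a b ∧ φ (hSwap x z) = hSwap a c := by
  obtain ⟨a, b, hab, e1⟩ := map_hswap h0 φ hxy
  obtain ⟨c, d, hcd, e2⟩ := map_hswap h0 φ hxz
  have hne : hSwap a b ≠ hSwap c d := by
    rw [← e1, ← e2]
    intro h
    rcases hswap_eq_cases hxy (φ.injective h) with h | h
    · exact hyz h.2
    · exact hxz h.1
  have hnc : hSwap a b * hSwap c d ≠ hSwap c d * hSwap a b := by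
    rw [← e1, ← e2, ← map_mul, ← map_mul]
    intro h
    have h := φ.injective h
    have h' : swap x y * swap x z = swap x z * swap x y := congrArg Subtype.val h
    have h'' := congrArg (fun f : Perm (XH n) => f z) h'
    simp [swap_apply_of_ne_of_ne hxz.symm hyz.symm] at h''
    exact hxy h''.symm
  by_cases h1 : a = c
  · subst h1
    exact ⟨a, b, d, hab, hcd, fun h => hne (by rw [h]), e1, e2⟩
  by_cases h2 : a = d
  · subst h2
    exact ⟨a, b, c, hab, hcd.symm, fun h => hne (by rw [h, hswap_comm]), e1, by rw [e2, hswap_comm]⟩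
  by_cases h3 : b = c
  · subst h3
    exact ⟨b, a, d, hab.symm, hcd, h2, by rw [e1, hswap_comm], e2⟩
  by_cases h4 : b = d
  · subst h4
    exact ⟨b, a, c, hab.symm, hcd.symm, h1, by rw [e1, hswap_comm], by rw [e2, hswap_comm]⟩
  exact absurd (hswap_commute h1 h2 h3 h4) hnc

theorem map_star (h0 : 0 < n) (φ : Houghton n ≃* Houghton n) (x : XH n) :
    ∃ a, ∀ y, y ≠ x → ∃ b, b ≠ a ∧ φ (hSwap x y) = hSwap a b := by
  have : Infinite (XH n) := by have : Nonempty (Fin n) := ⟨⟨0, h0⟩⟩; infer_instance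
  obtain ⟨y, hy⟩ := Infinite.exists_notMem_finset ({x} : Finset (XH n))
  obtain ⟨z, hz⟩ := Infinite.exists_notMem_finset ({x, y} : Finset (XH n))
  simp at hy hz
  obtain ⟨a, b, c, hab, hac, hbc, e1, e2⟩ := map_two h0 φ (Ne.symm hy) (Ne.symm hz.1) (Ne.symm hz.2)
  refine ⟨a, fun w hw => ?_⟩
  by_cases hwy : w = y
  · subst hwy; exact ⟨b, hab.symm, e1⟩
  by_cases hwz : w = z
  · subst hwz; exact ⟨c, hac.symm, e2⟩
  obtain ⟨a1, b1, c1, hab1, hac1, hbc1, e3, e4⟩ :=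
    map_two h0 φ (Ne.symm hw) (Ne.symm hy) hwy
  obtain ⟨a2, b2, c2, hab2, hac2, hbc2, e5, e6⟩ :=
    map_two h0 φ (Ne.symm hw) (Ne.symm hz.1) hwz
  have key : φ (hSwap x w) ≠ hSwap b c := by
    intro h
    rw [← hswap_braid hac hbc, ← e1, ← e2, ← map_mul, ← map_mul,
      hswap_braid (Ne.symm hz.1) (Ne.symm hz.2)] at h
    rcases hswap_eq_cases (Ne.symm hw) (φ.injective h) with h | h
    · exact hy h.1.symm
    · exact hz.1 h.1.symm
  have k1 := hswap_eq_cases hab (e1.symm.trans e4)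
  have k2 := hswap_eq_cases hac (e2.symm.trans e6)
  have k3 := hswap_eq_cases hab1 (e3.symm.trans e5)
  rcases k1 with ⟨rfl, rfl⟩ | ⟨rfl, rfl⟩
  · exact ⟨b1, hab1.symm, e3⟩
  · rcases k2 with ⟨rfl, rfl⟩ | ⟨rfl, rfl⟩
    · exact ⟨b2, hab2.symm, e5⟩
    · exfalso
      rcases k3 with ⟨rfl, rfl⟩ | ⟨rfl, rfl⟩
      · exact hbc rfl
      · exact key e3

/-- Every automorphism of `H_n` is conjugation by a permutation. -/
theorem exists_conj (h0 : 0 < n) (φ : Houghton n ≃* Houghton n) :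
    ∃ σ : Perm (XH n), ∀ g : Houghton n,
      (φ g : Perm (XH n)) = σ * (g : Perm (XH n)) * σ⁻¹ := by
  have : Infinite (XH n) := by have : Nonempty (Fin n) := ⟨⟨0, h0⟩⟩; infer_instance
  choose s hs using map_star h0 φ
  have inj : Function.Injective s := by
    intro x y hxy
    by_contra hne
    obtain ⟨z, hz⟩ := Infinite.exists_notMem_finset ({x, y} : Finset (XH n))
    simp at hz
    obtain ⟨b, hb, e1⟩ := hs x z hz.1
    obtain ⟨c, hc, e2⟩ := hs y z hz.2
    obtain ⟨d, hd, e3⟩ := hs x y (Ne.symm hne)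
    have hbr : hSwap z x * hSwap z y * hSwap z x = hSwap x y := hswap_braid hz.2 hne
    have h := congrArg φ hbr
    rw [map_mul, map_mul, hswap_comm z x, hswap_comm z y, e1, e2, e3, ← hxy] at h
    rw [← hxy] at hc
    have hbc : b ≠ c := by
      rintro rfl
      have := hswap_eq_cases (Ne.symm hz.1) (φ.injective (e1.trans ((hxy ▸ e2).symm)))
      rcases this with h | h
      · exact hne h.1
      · exact hz.1 h.1.symm
    rw [hswap_braid hc.symm hbc] at h
    rcases hswap_eq_cases hbc h with h | h
    · exact hb h.1
    · exact hc h.2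
  have hsw : ∀ x y, x ≠ y → φ (hSwap x y) = hSwap (s x) (s y) := by
    intro x y hxy
    obtain ⟨b, hb, e1⟩ := hs x y (Ne.symm hxy)
    obtain ⟨c, hc, e2⟩ := hs y x hxy
    rw [hswap_comm, e1] at e2
    rcases hswap_eq_cases hb.symm e2 with h | h
    · exact absurd (inj h.1) hxy
    · rw [e1, h.2]
  have surj : Function.Surjective s := by
    intro a
    obtain ⟨b, hb⟩ := Infinite.exists_notMem_finset ({a} : Finset (XH n))
    simp at hb
    obtain ⟨x, y, hxy, e⟩ := map_hswap h0 φ.symm (Ne.symm hb)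
    have e' : hSwap a b = hSwap (s x) (s y) := by
      rw [← hsw x y hxy, ← e, MulEquiv.apply_symm_apply]
    rcases hswap_eq_cases (Ne.symm hb) e' with h | h
    · exact ⟨x, h.1.symm⟩
    · exact ⟨y, h.1.symm⟩
  refine ⟨Equiv.ofBijective s ⟨inj, surj⟩, fun g => ?_⟩
  rw [eq_mul_inv_iff_mul_eq]
  ext1 x
  change (φ g : Perm (XH n)) (s x) = s ((g : Perm (XH n)) x)
  have hy : ∀ y, y ≠ x → (φ g : Perm (XH n)) (s x) = s ((g : Perm (XH n)) x) ∨
      (φ g : Perm (XH n)) (s x) = s ((g : Perm (XH n)) y) := by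
    intro y hy
    have h := congrArg φ (hswap_conj g x y)
    rw [map_mul, map_mul, map_inv, hsw x y hy.symm,
      hsw _ _ (fun h => hy.symm ((g : Perm (XH n)).injective h)), hswap_conj] at h
    rcases hswap_eq_cases (fun h => hy.symm (inj ((φ g : Perm (XH n)).injective h))) h with h | h
    · exact Or.inl h.1
    · exact Or.inr h.1
  obtain ⟨y, hy1⟩ := Infinite.exists_notMem_finset ({x} : Finset (XH n))
  obtain ⟨z, hz⟩ := Infinite.exists_notMem_finset ({x, y} : Finset (XH n))
  simp at hy1 hz
  rcases hy y hy1 with h | h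
  · exact h
  rcases hy z hz.1 with h' | h'
  · exact h'
  exact absurd ((g : Perm (XH n)).injective (inj (h'.symm.trans h))) hz.2

end Conj

open Filter

section Norm
variable {n : ℕ}

/-- `σ` normalizes `H_n` (both inclusions). -/
def NormH (σ : Equiv.Perm (XH n)) : Prop :=
  ∀ g : Equiv.Perm (XH n), g ∈ Houghton n ↔ σ * g * σ⁻¹ ∈ Houghton n

theorem NormH.inv {σ : Equiv.Perm (XH n)} (h : NormH σ) : NormH σ⁻¹ := by
  intro g
  rw [h (σ⁻¹ * g * σ⁻¹⁻¹)]
  simp [mul_assoc]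

theorem NormH.mul {σ τ : Equiv.Perm (XH n)} (h : NormH σ) (h' : NormH τ) : NormH (σ * τ) := by
  intro g
  rw [h' g, h]
  simp [mul_assoc]

theorem NormH.pow {σ : Equiv.Perm (XH n)} (h : NormH σ) (k : ℕ) : NormH (σ ^ k) := by
  induction k with
  | zero => intro g; simp
  | succ k ih => rw [pow_succ]; exact ih.mul h

theorem htv_gGen (h0 : 0 < n) (i : Fin n) (hi : i ≠ ray0 n h0) :
    HasTranslationVector (gGen n h0 i hi) (gVec n h0 i) := by
  refine ⟨{(ray0 n h0, 0)}, ?_⟩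
  rintro ⟨j, p⟩ hx
  rw [Finset.mem_singleton] at hx
  have hx' : j ≠ ray0 n h0 ∨ p ≠ 0 := by
    by_contra h
    push Not at h
    exact hx (by rw [h.1, h.2])
  show (gFun n h0 i (j, p)).1 = j ∧ ((gFun n h0 i (j, p)).2 : ℤ) = (p : ℤ) + gVec n h0 i j
  simp only [gFun, gVec]
  split_ifs <;> simp_all [Prod.ext_iff] <;> omega

/-- On each ray, some element of `H_n` is eventually translation by one. -/
theorem exists_shift (hn : 2 ≤ n) (j : Fin n) :
    ∃ t ∈ Houghton n, ∀ᶠ p in atTop, t (j, p) = (j, p + 1) := by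
  have h0 : 0 < n := by omega
  have key : ∃ t m, HasTranslationVector (n := n) t m ∧ m j = 1 := by
    by_cases hj : j = ray0 n h0
    · have hi : (⟨1, by omega⟩ : Fin n) ≠ ray0 n h0 := by simp [ray0]
      exact ⟨_, _, htv_inv (htv_gGen h0 ⟨1, by omega⟩ hi), by simp [gVec, hj]⟩
    · exact ⟨_, _, htv_gGen h0 j hj, by simp [gVec, hj]⟩
  obtain ⟨t, m, ht, hm⟩ := key
  refine ⟨t, ⟨m, ht⟩, ?_⟩
  rw [htv_iff] at ht
  filter_upwards [rays_of_cof ht j] with p hp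
  refine Prod.ext hp.1 ?_
  have := hp.2
  simp only [hm] at this
  simp only
  omega

/-- `σ` permutes the rays according to `f`, up to finitely many points. -/
def RayMap (σ : Equiv.Perm (XH n)) (f : Fin n → Fin n) : Prop :=
  ∀ᶠ x in cofinite, (σ x).1 = f x.1

theorem RayMap.mul {σ τ : Equiv.Perm (XH n)} {f g : Fin n → Fin n} (h : RayMap σ f)
    (h' : RayMap τ g) : RayMap (σ * τ) (f ∘ g) := by
  filter_upwards [h', cof_comp h τ] with x h1 h2
  rw [Equiv.Perm.mul_apply, h2, h1]; rfl

theorem RayMap.one : RayMap (1 : Equiv.Perm (XH n)) id :=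
  Eventually.of_forall fun _ => rfl

theorem RayMap.uniq {σ : Equiv.Perm (XH n)} {f g : Fin n → Fin n} (h : RayMap σ f)
    (h' : RayMap σ g) : f = g := by
  ext1 j
  obtain ⟨p, h1, h2⟩ := (rays_of_cof (h.and h') j).exists
  exact h1.symm.trans h2

theorem eventually_const {P : ℕ → Prop} (h : ∀ᶠ p in atTop, (P (p + 1) ↔ P p)) :
    (∀ᶠ p in atTop, P p) ∨ (∀ᶠ p in atTop, ¬ P p) := by
  obtain ⟨N, hN⟩ := eventually_atTop.mp h
  have : ∀ p, N ≤ p → (P p ↔ P N) := by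
    intro p hp
    induction p, hp using Nat.le_induction with
    | base => rfl
    | succ p hp ih => rw [hN p hp, ih]
  by_cases hc : P N
  · left; filter_upwards [eventually_ge_atTop N] with p hp; rwa [this p hp]
  · right; filter_upwards [eventually_ge_atTop N] with p hp; rwa [this p hp]

theorem exists_rayMap (hn : 2 ≤ n) {σ : Equiv.Perm (XH n)} (h : NormH σ) :
    ∃ f, RayMap σ f := by
  have key : ∀ j : Fin n, ∃ i, ∀ᶠ p in atTop, (σ (j, p)).1 = i := by
    intro j
    obtain ⟨t, ht, hs⟩ := exists_shift hn j
    obtain ⟨m, hm⟩ := (h t).mp ht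
    rw [htv_iff] at hm
    have h1 := rays_of_cof (cof_comp hm σ) j
    have h2 : ∀ᶠ p in atTop, (σ (j, p + 1)).1 = (σ (j, p)).1 := by
      filter_upwards [h1, hs] with p h1 h2
      have := h1.1
      simpa [h2] using this
    by_contra hc
    have h3 : ∀ i, ∀ᶠ p in atTop, ¬ (σ (j, p)).1 = i := by
      intro i
      rcases eventually_const (P := fun p => (σ (j, p)).1 = i)
        (by filter_upwards [h2] with p hp; rw [hp]) with h | h
      · exact absurd ⟨i, h⟩ hc
      · exact h
    rw [← eventually_all] at h3
    obtain ⟨p, hp⟩ := h3.exists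
    exact hp _ rfl
  choose f hf using key
  exact ⟨f, cof_of_rays hf⟩

theorem exists_pow_rayMap (hn : 2 ≤ n) {σ : Equiv.Perm (XH n)} (h : NormH σ) :
    ∃ N, 0 < N ∧ RayMap (σ ^ N) id := by
  obtain ⟨f, hf⟩ := exists_rayMap hn h
  obtain ⟨g, hg⟩ := exists_rayMap hn h.inv
  have e1 : f ∘ g = id := by
    refine RayMap.uniq (σ := 1) ?_ RayMap.one
    have := hf.mul hg
    rwa [mul_inv_cancel] at this
  have e2 : g ∘ f = id := by
    refine RayMap.uniq (σ := 1) ?_ RayMap.one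
    have := hg.mul hf
    rwa [inv_mul_cancel] at this
  let π : Equiv.Perm (Fin n) := ⟨f, g, fun x => congrFun e2 x, fun x => congrFun e1 x⟩
  have hp : ∀ k : ℕ, RayMap (σ ^ k) (π ^ k : Equiv.Perm (Fin n)) := by
    intro k
    induction k with
    | zero => exact RayMap.one
    | succ k ih => rw [pow_succ, pow_succ]; exact ih.mul hf
  refine ⟨orderOf π, orderOf_pos π, ?_⟩
  have := hp (orderOf π)
  rwa [pow_orderOf_eq_one] at this

theorem conj_apply (σ t : Equiv.Perm (XH n)) (x : XH n) : (σ * t * σ⁻¹) (σ x) = σ (t x) := by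
  simp

theorem linear_aux {f : ℕ → ℤ} {c : ℤ} (h : ∀ᶠ p in atTop, f (p + 1) = f p + c) :
    ∃ d, ∀ᶠ p : ℕ in atTop, f p = c * p + d := by
  obtain ⟨N, hN⟩ := eventually_atTop.mp h
  refine ⟨f N - c * N, eventually_atTop.mpr ⟨N, fun p hp => ?_⟩⟩
  induction p, hp using Nat.le_induction with
  | base => ring
  | succ p hp ih => rw [hN p hp, ih]; push_cast; ring

theorem mem_of_rayMap_id (hn : 2 ≤ n) {τ : Equiv.Perm (XH n)} (h : NormH τ)
    (hr : RayMap τ id) : τ ∈ Houghton n := by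
  have key : ∀ j : Fin n, ∃ d : ℤ, ∀ᶠ p : ℕ in atTop, ((τ (j, p)).2 : ℤ) = p + d := by
    intro j
    obtain ⟨t, ht, hs⟩ := exists_shift hn j
    obtain ⟨m, hm⟩ := (h t).mp ht
    obtain ⟨k, hk⟩ := (h.inv t).mp ht
    rw [htv_iff] at hm hk
    have hrj := rays_of_cof hr j
    have h2 : ∀ᶠ p in atTop, ((τ (j, p + 1)).2 : ℤ) = (τ (j, p)).2 + m j := by
      filter_upwards [rays_of_cof (cof_comp hm τ) j, hs, hrj] with p h1 h2 h3
      have := h1.2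
      rw [conj_apply, h2, h3] at this
      exact this
    obtain ⟨d, hd⟩ := linear_aux (f := fun p => ((τ (j, p)).2 : ℤ)) h2
    -- second relation
    have h4 : ∀ᶠ p : ℕ in atTop, ∃ q : ℕ, (q : ℤ) = p + k j ∧ t (τ (j, p)) = τ (j, q) := by
      filter_upwards [rays_of_cof hk j] with p hp
      refine ⟨((τ⁻¹ * t * τ⁻¹⁻¹) (j, p)).2, hp.2, ?_⟩
      have : (τ⁻¹ * t * τ⁻¹⁻¹) (j, p) = (j, ((τ⁻¹ * t * τ⁻¹⁻¹) (j, p)).2) := Prod.ext hp.1 rfl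
      rw [← this]
      simp
    have h5 : ∀ᶠ p : ℕ in atTop, t (τ (j, p)) = (j, (τ (j, p)).2 + 1) := by
      have hs' : ∀ᶠ x : XH n in cofinite, x.1 = j → t x = (j, x.2 + 1) := by
        apply cof_of_rays
        intro i
        by_cases hij : i = j
        · subst hij
          filter_upwards [hs] with p hp _ using hp
        · exact Eventually.of_forall fun p h => absurd h hij
      filter_upwards [rays_of_cof (cof_comp hs' τ) j, hrj] with p h1 h2
      exact h1 h2
    obtain ⟨N, hN⟩ := eventually_atTop.mp hd
    have hmk : m j * k j = 1 := by
      obtain ⟨p, ⟨q, hq, h6⟩, h7, h8⟩ :=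
        (h4.and (h5.and (eventually_ge_atTop (N + (k j).natAbs)))).exists
      have a1 := hN p (by omega)
      have a2 := hN q (by omega)
      rw [h7] at h6
      rw [← h6, hq] at a2
      simp only at a1 a2
      push_cast at a2
      rw [a1] at a2
      linarith
    have hm1 : m j = 1 := by
      rcases Int.eq_one_or_neg_one_of_mul_eq_one hmk with h | h
      · exact h
      · exfalso
        have := hN (N + d.natAbs + 1) (by omega)
        rw [h] at this
        push_cast at this
        have := le_abs_self d
        omega
    refine ⟨d, ?_⟩
    filter_upwards [hd] with p hp
    rw [hp, hm1, one_mul]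
  choose d hd using key
  refine ⟨d, htv_iff.mpr ?_⟩
  exact hr.and (cof_of_rays (P := fun x => ((τ x).2 : ℤ) = x.2 + d x.1) hd)

end Norm

open Filter

section Gen
open Equiv
variable {n : ℕ}

/-- The translation vector sums to zero. -/
theorem htv_sum {g : Perm (XH n)} {m : Fin n → ℤ} (h : HasTranslationVector g m) :
    ∑ j, m j = 0 := by
  rw [htv_iff] at h
  have h1 : ∃ R : ℕ, ∀ j p, R ≤ p → (g (j, p)).1 = j ∧ ((g (j, p)).2 : ℤ) = (p : ℤ) + m j := by
    have := fun j => eventually_atTop.mp (rays_of_cof h j)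
    choose R hR using this
    refine ⟨∑ j, R j, fun j p hp => hR j p (le_trans ?_ hp)⟩
    exact Finset.single_le_sum (f := R) (fun _ _ => Nat.zero_le _) (Finset.mem_univ j)
  obtain ⟨R, hR⟩ := h1
  have hRm : ∀ j, 0 ≤ (R : ℤ) + m j := by
    intro j
    have := (hR j R le_rfl).2
    omega
  let A : Finset (Σ _ : Fin n, ℕ) := Finset.univ.sigma fun _ => Finset.range R
  let B : Finset (Σ _ : Fin n, ℕ) := Finset.univ.sigma fun j => Finset.range ((R : ℤ) + m j).toNat
  have hcard : A.card = B.card := by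
    refine Finset.card_bij (fun x _ => ⟨(g (x.1, x.2)).1, (g (x.1, x.2)).2⟩) ?_ ?_ ?_
    · rintro ⟨j, p⟩ hx
      simp only [A, B, Finset.mem_sigma, Finset.mem_univ, true_and, Finset.mem_range] at hx ⊢
      by_contra hc
      -- the image point is hit from outside the ball
      set y := g (j, p) with hy
      have hlarge : (R : ℤ) + m y.1 ≤ y.2 := by have := hRm y.1; omega
      obtain ⟨q, hq⟩ : ∃ q : ℕ, (q : ℤ) = y.2 - m y.1 :=
        ⟨((y.2 : ℤ) - m y.1).toNat, Int.toNat_of_nonneg (by omega)⟩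
      have hq' := hR y.1 q (by omega)
      have : g (y.1, q) = y := Prod.ext hq'.1 (by have := hq'.2; omega)
      have := g.injective (this.trans hy)
      have := congrArg Prod.snd this
      simp only at this
      omega
    · rintro ⟨j, p⟩ _ ⟨i, q⟩ _ hx
      simp only [Sigma.mk.injEq, heq_eq_eq] at hx
      have := g.injective (Prod.ext hx.1 hx.2)
      simpa using this
    · rintro ⟨j, p⟩ hx
      simp only [A, B, Finset.mem_sigma, Finset.mem_univ, true_and, Finset.mem_range] at hx
      have e : g (g⁻¹ (j, p)) = (j, p) := g.apply_symm_apply _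
      refine ⟨⟨(g⁻¹ (j, p)).1, (g⁻¹ (j, p)).2⟩, ?_, ?_⟩
      · simp only [A, Finset.mem_sigma, Finset.mem_univ, true_and, Finset.mem_range]
        by_contra hc
        obtain ⟨h1, h2⟩ := hR (g⁻¹ (j, p)).1 (g⁻¹ (j, p)).2 (by omega)
        rw [Prod.mk.eta, e] at h1 h2
        simp only at h1 h2
        rw [← h1] at h2
        omega
      · simp only [Prod.mk.eta, e]
  have hA : (A.card : ℤ) = ∑ j : Fin n, (R : ℤ) := by
    simp [A, Finset.card_sigma]
  have hB : (B.card : ℤ) = ∑ j : Fin n, ((R : ℤ) + m j) := by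
    simp only [B, Finset.card_sigma, Finset.card_range, Nat.cast_sum]
    exact Finset.sum_congr rfl fun j _ => Int.toNat_of_nonneg (hRm j)
  rw [hcard, hB, Finset.sum_add_distrib] at hA
  linarith

theorem comm_gGen (h0 : 0 < n) (i j : Fin n) (hi : i ≠ ray0 n h0) (hj : j ≠ ray0 n h0)
    (hij : i ≠ j) :
    hGen n h0 i hi * hGen n h0 j hj * (hGen n h0 i hi)⁻¹ * (hGen n h0 j hj)⁻¹ =
      hSwap (i, 0) (j, 0) := by
  apply Subtype.ext
  ext1 ⟨k, p⟩
  change gFun n h0 i (gFun n h0 j (gInvFun n h0 i (gInvFun n h0 j (k, p)))) =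
    swap (i, 0) (j, 0) (k, p)
  rw [swap_apply_def]
  simp only [gFun, gInvFun, Prod.mk.injEq]
  by_cases hkj : k = j
  · subst hkj
    by_cases hp : p = 0
    · subst hp
      simp [hi.symm, hj, hj.symm, hij, hij.symm]
    · simp [hi, hj, hij, hij.symm, hp]
      omega
  by_cases hki : k = i
  · subst hki
    by_cases hp : p = 0
    · subst hp
      simp [hi, hij, hj, hij.symm]
    · simp [hi, hij, hp]
      omega
  by_cases hk0 : k = ray0 n h0
  · subst hk0
    simp [hi.symm, hj.symm]
  · simp [hki, hkj, hk0]

theorem gens_closure (hn : 3 ≤ n) (h0 : 0 < n) :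
    Subgroup.closure (houghtonGensOnly n h0) = ⊤ := by
  set C := Subgroup.closure (houghtonGensOnly n h0) with hC
  have hgen : ∀ i hi, hGen n h0 i hi ∈ C := fun i hi => Subgroup.subset_closure ⟨i, hi, rfl⟩
  have hcomm : ∀ i j, i ≠ ray0 n h0 → j ≠ ray0 n h0 → i ≠ j → hSwap (i, 0) (j, 0) ∈ C := by
    intro i j hi hj hij
    rw [← comm_gGen h0 i j hi hj hij]
    exact C.mul_mem (C.mul_mem (C.mul_mem (hgen _ _) (hgen _ _)) (C.inv_mem (hgen _ _)))
      (C.inv_mem (hgen _ _))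
  have hconj : ∀ g ∈ C, ∀ x y, hSwap x y ∈ C →
      hSwap ((g : Perm (XH n)) x) ((g : Perm (XH n)) y) ∈ C := by
    intro g hg x y hxy
    rw [← hswap_conj]
    exact C.mul_mem (C.mul_mem hg hxy) (C.inv_mem hg)
  have hself : ∀ x : XH n, hSwap x x = 1 := fun x => Subtype.ext (swap_self x)
  have htrans : ∀ x y z, hSwap x y ∈ C → hSwap y z ∈ C → hSwap x z ∈ C := by
    intro x y z h1 h2
    by_cases hyz : y = z
    · subst hyz; exact h1
    by_cases hxz : x = z
    · subst hxz; rw [hself]; exact C.one_mem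
    rw [← hswap_braid hyz hxz, hswap_comm y x]
    exact C.mul_mem (C.mul_mem h1 h2) h1
  have hsymm : ∀ x y, hSwap x y ∈ C → hSwap y x ∈ C := fun x y h => by rwa [hswap_comm]
  have hinv : ∀ i hi, (hGen n h0 i hi)⁻¹ ∈ C := fun i hi => C.inv_mem (hgen i hi)
  have hex : ∀ j : Fin n, ∃ i, i ≠ ray0 n h0 ∧ i ≠ j := by
    intro j
    by_cases hj : j.val = 1
    · exact ⟨⟨2, by omega⟩, by simp [ray0], by intro h; rw [← h] at hj; simp at hj⟩
    · exact ⟨⟨1, by omega⟩, by simp [ray0], by intro h; rw [← h] at hj; simp at hj⟩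
  have hray0 : ∀ j, j ≠ ray0 n h0 → ∀ p, hSwap (ray0 n h0, p) (j, 0) ∈ C := by
    intro j hj p
    obtain ⟨i, hi, hij⟩ := hex j
    induction p with
    | zero =>
      have := hconj _ (hinv i hi) _ _ (hcomm i j hi hj hij)
      have e1 : ((hGen n h0 i hi)⁻¹ : Houghton n).1 (i, 0) = (ray0 n h0, 0) := by
        change gInvFun n h0 i (i, 0) = _
        simp [gInvFun]
      have e2 : ((hGen n h0 i hi)⁻¹ : Houghton n).1 (j, 0) = (j, 0) := by
        change gInvFun n h0 i (j, 0) = _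
        simp [gInvFun, hij.symm, hj]
      rwa [e1, e2] at this
    | succ p ih =>
      have := hconj _ (hinv i hi) _ _ ih
      have e1 : ((hGen n h0 i hi)⁻¹ : Houghton n).1 (ray0 n h0, p) = (ray0 n h0, p + 1) := by
        change gInvFun n h0 i (ray0 n h0, p) = _
        simp [gInvFun, hi.symm]
      have e2 : ((hGen n h0 i hi)⁻¹ : Houghton n).1 (j, 0) = (j, 0) := by
        change gInvFun n h0 i (j, 0) = _
        simp [gInvFun, hij.symm, hj]
      rwa [e1, e2] at this
  have hstep : ∀ j, j ≠ ray0 n h0 → ∀ p, hSwap (j, p) (j, p + 1) ∈ C := by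
    intro j hj p
    have eg : ∀ q, (hGen n h0 j hj).1 (j, q) = (j, q + 1) := by
      intro q
      change gFun n h0 j (j, q) = _
      simp [gFun, hj]
    induction p with
    | zero =>
      have := hconj _ (hgen j hj) _ _ (hray0 j hj 0)
      have e1 : (hGen n h0 j hj).1 (ray0 n h0, 0) = (j, 0) := by
        change gFun n h0 j (ray0 n h0, 0) = _
        simp [gFun]
      rwa [e1, eg] at this
    | succ p ih =>
      have := hconj _ (hgen j hj) _ _ ih
      rwa [eg, eg] at this
  have hbase : ∀ x : XH n, hSwap x (ray0 n h0, 0) ∈ C := by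
    rintro ⟨j, p⟩
    by_cases hj : j = ray0 n h0
    · obtain ⟨i, hi, _⟩ := hex j
      rw [hj]
      exact htrans _ _ _ (hray0 i hi p) (hsymm _ _ (hray0 i hi 0))
    · induction p with
      | zero => exact hsymm _ _ (hray0 j hj 0)
      | succ p ih => exact htrans _ _ _ (hsymm _ _ (hstep j hj p)) ih
  have hswap : ∀ x y : XH n, hSwap x y ∈ C := fun x y =>
    htrans _ _ _ (hbase x) (hsymm _ _ (hbase y))
  -- finitely supported elements
  have hfin : ∀ g : Houghton n, HasTranslationVector (g : Perm (XH n)) 0 → g ∈ C := by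
    intro g hg
    rw [htv_iff, eventually_cofinite] at hg
    have h1 : (g : Perm (XH n)) ∈ Subgroup.closure {σ : Perm (XH n) | σ.IsSwap} := by
      rw [mem_closure_isSwap']
      refine hg.subset fun x hx hc => hx ?_
      refine Prod.ext hc.1 ?_
      have := hc.2
      simp only [Pi.zero_apply, add_zero, Nat.cast_inj] at this
      exact this
    have h2 : Subgroup.closure {σ : Perm (XH n) | σ.IsSwap} ≤ C.map (Houghton n).subtype := by
      rw [Subgroup.closure_le]
      rintro _ ⟨x, y, _, rfl⟩
      exact ⟨hSwap x y, hswap x y, rfl⟩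
    obtain ⟨g', hg', e⟩ := h2 h1
    have : g' = g := Subtype.ext e
    rwa [← this]
  -- translation vectors
  let V : AddSubgroup (Fin n → ℤ) :=
    { carrier := {m | ∃ g ∈ C, HasTranslationVector (g : Perm (XH n)) m}
      zero_mem' := ⟨1, C.one_mem, htv_one⟩
      add_mem' := by
        rintro a b ⟨g, hg, h1⟩ ⟨g', hg', h1'⟩
        exact ⟨g * g', C.mul_mem hg hg', htv_mul h1 h1'⟩
      neg_mem' := by
        rintro a ⟨g, hg, h1⟩
        exact ⟨g⁻¹, C.inv_mem hg, htv_inv h1⟩ }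
  have hV : ∀ m : Fin n → ℤ, ∑ j, m j = 0 → m ∈ V := by
    intro m hm
    have e : m = ∑ i ∈ Finset.univ.erase (ray0 n h0), m i • gVec n h0 i := by
      ext j
      rw [Finset.sum_apply]
      by_cases hj : j = ray0 n h0
      · subst hj
        rw [← Finset.add_sum_erase _ _ (Finset.mem_univ (ray0 n h0))] at hm
        simp only [gVec, Pi.smul_apply, if_true, smul_eq_mul, mul_neg, mul_one,
          Finset.sum_neg_distrib]
        linarith
      · rw [Finset.sum_eq_single j]
        · simp [gVec, hj]
        · intro b _ hb
          simp [gVec, hj, hb.symm]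
        · intro h
          exact absurd (Finset.mem_erase.mpr ⟨hj, Finset.mem_univ j⟩) h
    rw [e]
    refine AddSubgroup.sum_mem _ fun i hi => AddSubgroup.zsmul_mem _ ?_ _
    exact ⟨_, hgen i (Finset.ne_of_mem_erase hi), htv_gGen h0 i (Finset.ne_of_mem_erase hi)⟩
  rw [eq_top_iff]
  intro g _
  obtain ⟨m, hm⟩ := mem_htv g
  obtain ⟨g', hg', hm'⟩ := hV m (htv_sum hm)
  have h3 : g'⁻¹ * g ∈ C := by
    apply hfin
    have := htv_mul (htv_inv hm') hm
    rwa [neg_add_cancel] at this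
  have := C.mul_mem hg' h3
  rwa [mul_inv_cancel_left] at this

end Gen

/-- For every `n ≥ 3` and every automorphism `φ` of Houghton's
group `H_n`, the growth rate `GR(φ)` equals `1`. -/
theorem growthRate_automorphism_eq_one
    (n : ℕ) (hn : 3 ≤ n) (h0 : 0 < n)
    (φ : Houghton n ≃* Houghton n) :
    growthRate (houghtonGensOnly n h0) φ.toMonoidHom = 1 := by
  obtain ⟨σ, hσ⟩ := exists_conj h0 φ
  have hN : NormH σ := by
    intro g
    constructor
    · intro hg
      have := hσ ⟨g, hg⟩
      rw [← this]
      exact (φ ⟨g, hg⟩).2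
    · intro hg
      have := hσ (φ.symm ⟨_, hg⟩)
      rw [MulEquiv.apply_symm_apply] at this
      have := mul_left_cancel (mul_right_cancel this)
      rw [this]
      exact (φ.symm _).2
  obtain ⟨N, hNpos, hr⟩ := exists_pow_rayMap (by omega) hN
  have hmem := mem_of_rayMap_id (by omega) (hN.pow N) hr
  have hiter : ∀ k g, (((⇑φ)^[k] g : Houghton n) : Equiv.Perm (XH n)) =
      σ ^ k * (g : Equiv.Perm (XH n)) * (σ ^ k)⁻¹ := by
    intro k
    induction k with
    | zero => intro g; simp
    | succ k ih =>
      intro g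
      rw [Function.iterate_succ_apply, ih, hσ, pow_succ]
      group
  have : Nontrivial (Houghton n) :=
    ⟨hSwap (ray0 n h0, 0) (ray0 n h0, 1), 1, hswap_ne_one (by simp)⟩
  exact growth_aux (gens_closure hn h0) φ N hNpos ⟨σ ^ N, hmem⟩
    fun g => Subtype.ext (hiter N g)
end

section
/- For every automorphism φ of Houghton's group H_2, the growth rate GR(φ) equals 1. -/
namespace H2

/-- Identification of the two rays with the integers. -/
def c : XH 2 ≃ ℤ where
  toFun x := if x.1 = 0 then -(x.2 : ℤ) - 1 else (x.2 : ℤ)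
  invFun z := if z < 0 then (0, (-z - 1).toNat) else (1, z.toNat)
  left_inv := by
    rintro ⟨i, p⟩
    fin_cases i
    · have h : -(p : ℤ) - 1 < 0 := by omega
      simp [h]
    · simp
  right_inv := by
    intro z
    by_cases h : z < 0
    · simp [h]
    · simp [h]; omega

/-- The action of `H_2` on the integers. -/
def T : Houghton 2 →* Equiv.Perm ℤ :=
  (c.permCongrHom.toMonoidHom).comp (Houghton 2).subtype

theorem T_apply (g : Houghton 2) (x : ℤ) : T g x = c (g.1 (c.symm x)) := rfl

theorem T_inj {g h : Houghton 2} (H : ∀ x, T g x = T h x) : g = h := by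
  apply Subtype.ext
  ext1 y
  have := H (c y)
  simpa [T_apply] using this

theorem T_mul (g h : Houghton 2) (x : ℤ) : T (g * h) x = T g (T h x) := by
  rw [map_mul]; rfl

theorem T_inv_self (g : Houghton 2) (x : ℤ) : T g⁻¹ (T g x) = x := by
  rw [← T_mul]; simp

theorem T_self_inv (g : Houghton 2) (x : ℤ) : T g (T g⁻¹ x) = x := by
  rw [← T_mul]; simp

abbrev s : Houghton 2 := hGen 2 Nat.zero_lt_two 1 (by decide)
abbrev a : Houghton 2 := hAlpha 2 Nat.zero_lt_two

theorem T_s (x : ℤ) : T s x = x + 1 := by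
  rw [T_apply]
  show c (gFun 2 Nat.zero_lt_two 1 (c.symm x)) = x + 1
  by_cases h : x < 0
  · have h1 : c.symm x = (0, (-x - 1).toNat) := by simp [c, h]
    rw [h1]
    by_cases h2 : x = -1
    · subst h2; simp [gFun, ray0, c]
    · have h3 : (-x - 1).toNat ≠ 0 := by omega
      have h4 : gFun 2 Nat.zero_lt_two 1 (0, (-x - 1).toNat) = (0, (-x - 1).toNat - 1) := by
        simp only [gFun, ray0]
        rw [if_neg h3]
        rfl
      rw [h4]
      simp only [c, Equiv.coe_fn_mk, if_true]
      omega
  · have h1 : c.symm x = (1, x.toNat) := by simp [c, h]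
    rw [h1]
    simp [gFun, ray0, c]
    omega

theorem T_a : T a = Equiv.swap (-2) (-1) := by
  show c.permCongr (Equiv.swap (0, 0) (0, 1)) = _
  rw [Equiv.permCongr_def, Equiv.symm_trans_swap_trans]
  rw [Equiv.swap_comm]
  rfl

/-- `g` is translation by `m` outside `[-R, R]`. -/
def A (m R : ℤ) (g : Houghton 2) : Prop := ∀ x : ℤ, R < |x| → T g x = x + m

theorem exists_A (g : Houghton 2) : ∃ m R : ℤ, 0 ≤ R ∧ A m R g := by
  obtain ⟨g, v, K, hK⟩ := g
  obtain ⟨N, hN⟩ : ∃ N : ℕ, ∀ x ∈ K, x.2 < N := by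
    refine ⟨K.sup (fun x => x.2) + 1, fun x hx => ?_⟩
    have := Finset.le_sup (f := fun x : XH 2 => x.2) hx
    omega
  set G : Houghton 2 := ⟨g, v, K, hK⟩ with hG
  have hpos : ∀ x : ℤ, (N : ℤ) < x → T G x = x + v 1 := by
    intro x hx
    have hx0 : ¬ x < 0 := by omega
    have h1 : c.symm x = (1, x.toNat) := by simp [c, hx0]
    have h2 : (1, x.toNat) ∉ K := fun h => by
      have := hN _ h
      simp only at this
      omega
    obtain ⟨e1, e2⟩ := hK _ h2
    rw [T_apply, h1]
    show c (g (1, x.toNat)) = _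
    simp only [c, Equiv.coe_fn_mk, e1, e2]
    simp
    omega
  have hneg : ∀ x : ℤ, x < -(N : ℤ) - 1 → T G x = x + (- v 0) := by
    intro x hx
    have hx0 : x < 0 := by omega
    have h1 : c.symm x = (0, (-x - 1).toNat) := by simp [c, hx0]
    have h2 : (0, (-x - 1).toNat) ∉ K := fun h => by
      have := hN _ h
      simp only at this
      omega
    obtain ⟨e1, e2⟩ := hK _ h2
    rw [T_apply, h1]
    show c (g (0, (-x - 1).toNat)) = _
    simp only [c, Equiv.coe_fn_mk, e1, e2]
    simp only [if_true]
    omega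
  generalize v 1 = p at *
  generalize - v 0 = q at *
  set M : ℤ := N + 1 with hM
  have himg : (Finset.Icc (-M) M).image (T G) = Finset.Icc (-M + q) (M + p) := by
    ext y
    simp only [Finset.mem_image, Finset.mem_Icc]
    constructor
    · rintro ⟨x, ⟨h1, h2⟩, rfl⟩
      constructor
      · by_contra hc
        have := hneg (T G x - q) (by omega)
        have h3 : T G (T G x - q) = T G x := by omega
        have := (T G).injective h3
        omega
      · by_contra hc
        have := hpos (T G x - p) (by omega)
        have h3 : T G (T G x - p) = T G x := by omega
        have := (T G).injective h3
        omega
    · rintro ⟨h1, h2⟩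
      refine ⟨T G⁻¹ y, ⟨?_, ?_⟩, T_self_inv _ _⟩
      · by_contra hc
        have := hneg (T G⁻¹ y) (by omega)
        rw [T_self_inv] at this
        omega
      · by_contra hc
        have := hpos (T G⁻¹ y) (by omega)
        rw [T_self_inv] at this
        omega
  have hcard := congrArg Finset.card himg
  rw [Finset.card_image_of_injective _ (T G).injective, Int.card_Icc, Int.card_Icc] at hcard
  have hpq : p = q := by
    by_contra hne
    omega
  subst hpq
  refine ⟨p, M, by omega, fun x hx => ?_⟩
  rcases lt_abs.mp hx with h | h
  · exact hpos x (by omega)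
  · exact hneg x (by omega)

theorem A_mono {m R R' : ℤ} {g : Houghton 2} (h : A m R g) (hR : R ≤ R') : A m R' g :=
  fun x hx => h x (by omega)

theorem A_mul {m R m' R' : ℤ} {g h : Houghton 2} (hg : A m R g) (hh : A m' R' h) :
    ∃ R'' : ℤ, A (m + m') R'' (g * h) := by
  refine ⟨|R| + |R'| + |m'|, fun x hx => ?_⟩
  have := abs_nonneg R
  have := abs_nonneg R'
  have := abs_nonneg m'
  have := le_abs_self R
  have := le_abs_self R'
  have h1 := abs_sub_abs_le_abs_sub x (-m')
  rw [abs_neg, sub_neg_eq_add] at h1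
  rw [T_mul, hh x (by omega), hg _ (by omega)]
  ring

theorem A_inv {m R : ℤ} {g : Houghton 2} (hg : A m R g) : A (-m) (R + |m|) g⁻¹ := by
  intro x hx
  have h1 := abs_sub_abs_le_abs_sub x m
  have h2 := hg (x - m) (by omega)
  rw [sub_add_cancel] at h2
  rw [← h2, T_inv_self, h2]
  ring

theorem A_zpow {m R : ℤ} {g : Houghton 2} (hg : A m R g) (n : ℤ) :
    ∃ R' : ℤ, A (n * m) R' (g ^ n) := by
  induction n using Int.induction_on with
  | zero => exact ⟨0, fun x _ => by simp⟩
  | succ i ih =>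
    obtain ⟨R', h⟩ := ih
    obtain ⟨R'', h'⟩ := A_mul h hg
    refine ⟨R'', ?_⟩
    rw [zpow_add_one]
    convert h' using 1
    ring
  | pred i ih =>
    obtain ⟨R', h⟩ := ih
    obtain ⟨R'', h'⟩ := A_mul h (A_inv hg)
    refine ⟨R'', ?_⟩
    rw [zpow_sub_one]
    convert h' using 1
    ring

theorem A_unique {m R m' R' : ℤ} {g : Houghton 2} (hg : A m R g) (hg' : A m' R' g) : m = m' := by
  have h : ∀ z : ℤ, z ≤ |z| := le_abs_self
  have h1 := hg (|R| + |R'| + 1) (by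
    have := h (|R| + |R'| + 1); have := h R; have := abs_nonneg R'; omega)
  have h2 := hg' (|R| + |R'| + 1) (by
    have := h (|R| + |R'| + 1); have := h R'; have := abs_nonneg R; omega)
  omega

/-- Elements supported in `[-R, R]`. -/
def B (R : ℤ) : Subgroup (Houghton 2) where
  carrier := {g | ∀ x : ℤ, R < |x| → T g x = x}
  one_mem' := fun x _ => by simp
  mul_mem' := by
    intro g h hg hh x hx
    rw [T_mul, hh x hx, hg x hx]
  inv_mem' := by
    intro g hg x hx
    conv_lhs => rw [← hg x hx]
    exact T_inv_self g x

theorem mem_B {R : ℤ} {g : Houghton 2} : g ∈ B R ↔ ∀ x : ℤ, R < |x| → T g x = x := Iff.rfl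

theorem mem_B_iff {R : ℤ} {g : Houghton 2} : g ∈ B R ↔ A 0 R g := by
  simp [mem_B, A]

theorem B_mono {R R' : ℤ} (h : R ≤ R') {g : Houghton 2} (hg : g ∈ B R) : g ∈ B R' :=
  fun x hx => hg x (by omega)

theorem B_le {R : ℤ} {g : Houghton 2} (hg : g ∈ B R) {x : ℤ} (hx : |x| ≤ R) : |T g x| ≤ R := by
  by_contra hc
  have h := hg (T g x) (by omega)
  have := (T g).injective h
  rw [this] at hc
  exact hc hx

theorem T_s_zpow (n : ℤ) (x : ℤ) : T (s ^ n) x = x + n := by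
  have h1 : ∀ y, T s⁻¹ y = y - 1 := by
    intro y
    have := T_s (y - 1)
    rw [sub_add_cancel] at this
    conv_lhs => rw [← this]
    exact T_inv_self _ _
  induction n using Int.induction_on generalizing x with
  | zero => simp
  | succ i ih => rw [zpow_add_one, T_mul, ih, T_s]; ring
  | pred i ih => rw [zpow_sub_one, T_mul, ih, h1]; ring

theorem A_decomp {m R : ℤ} {g : Houghton 2} (hg : A m R g) :
    ∃ f ∈ B R, g = s ^ m * f := by
  refine ⟨s ^ (-m) * g, ?_, by simp⟩
  intro x hx
  rw [T_mul, hg x hx, T_s_zpow]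
  ring

/-- adjacent transpositions -/
def σ (i : ℤ) : Houghton 2 := s ^ (i + 2) * a * (s ^ (i + 2))⁻¹

theorem T_σ (i : ℤ) : T (σ i) = Equiv.swap i (i + 1) := by
  have : T (σ i) = T (s ^ (i + 2)) * Equiv.swap (-2) (-1) * (T (s ^ (i + 2)))⁻¹ := by
    rw [σ, map_mul, map_mul, map_inv, T_a]
  rw [this, ← Equiv.swap_apply_apply, T_s_zpow, T_s_zpow]
  congr 1 <;> ring

theorem σ_mul_self (i : ℤ) : σ i * σ i = 1 := by
  apply T_inj
  intro x
  rw [T_mul, T_σ]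
  simp

theorem bubble (lo : ℤ) (n : ℕ) : ∀ f : Houghton 2,
    (∀ x, x < lo ∨ lo + n ≤ x → T f x = x) →
    ∃ l : List ℤ, (∀ i ∈ l, lo ≤ i ∧ i + 1 < lo + n) ∧ l.length ≤ n * n ∧
      f = (l.map σ).prod := by
  induction n with
  | zero =>
    intro f hf
    refine ⟨[], by simp, by simp, ?_⟩
    apply T_inj
    intro x
    rw [hf x (by push_cast; omega)]
    simp
  | succ n ih =>
    have key : ∀ j : ℕ, j ≤ n → ∀ f : Houghton 2,
        (∀ x, x < lo ∨ lo + (n + 1 : ℕ) ≤ x → T f x = x) → T f (lo + n) = lo + n - j →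
        ∃ l : List ℤ, (∀ i ∈ l, lo ≤ i ∧ i + 1 < lo + (n + 1 : ℕ)) ∧ l.length ≤ n * n + j ∧
          f = (l.map σ).prod := by
      intro j
      induction j with
      | zero =>
        intro _ f hf hj
        obtain ⟨l, h1, h2, h3⟩ := ih f (by
          intro x hx
          by_cases hxn : x = lo + n
          · subst hxn; simpa using hj
          · exact hf x (by push_cast; omega))
        exact ⟨l, fun i hi => ⟨(h1 i hi).1, by have := (h1 i hi).2; push_cast; omega⟩,
          by omega, h3⟩
      | succ j ihj =>
        intro hj f hf hfj
        push_cast at hfj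
        obtain ⟨l, h1, h2, h3⟩ := ihj (by omega) (σ (lo + n - (j + 1)) * f) (by
          intro x hx
          push_cast at hx
          rw [T_mul, hf x (by push_cast; omega), T_σ]
          apply Equiv.swap_apply_of_ne_of_ne <;> omega) (by
          rw [T_mul, hfj, T_σ, Equiv.swap_apply_left]; ring)
        refine ⟨(lo + n - (j + 1)) :: l, ?_, by simp only [List.length_cons]; omega, ?_⟩
        · intro i hi
          rcases List.mem_cons.mp hi with rfl | hi
          · push_cast; omega
          · exact h1 i hi
        · rw [List.map_cons, List.prod_cons, ← h3, ← mul_assoc, σ_mul_self, one_mul]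
    intro f hf
    have hr1 : lo ≤ T f (lo + n) := by
      by_contra hc
      have := (T f).injective (hf (T f (lo + n)) (by omega))
      omega
    have hr2 : T f (lo + n) ≤ lo + n := by
      by_contra hc
      have := (T f).injective (hf (T f (lo + n)) (by push_cast; omega))
      omega
    obtain ⟨l, h1, h2, h3⟩ := key (lo + n - T f (lo + n)).toNat (by omega) f hf (by omega)
    refine ⟨l, h1, h2.trans ?_, h3⟩
    have : (lo + n - T f (lo + n)).toNat ≤ n := by omega
    nlinarith

theorem B_list (R : ℕ) (f : Houghton 2) (hf : f ∈ B R) :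
    ∃ l : List ℤ, (∀ i ∈ l, |i| ≤ R) ∧ l.length ≤ (2 * R + 1) * (2 * R + 1) ∧
      f = (l.map σ).prod := by
  obtain ⟨l, h1, h2, h3⟩ := bubble (-R) (2 * R + 1) f (by
    intro x hx
    apply hf
    rw [lt_abs]
    push_cast at hx
    omega)
  refine ⟨l, fun i hi => ?_, h2, h3⟩
  have := h1 i hi
  push_cast at this
  rw [abs_le]
  omega

abbrev S : Set (Houghton 2) := houghtonGensOnly 2 Nat.zero_lt_two ∪ {hAlpha 2 Nat.zero_lt_two}

/-- `g` is a product of at most `n` generators or inverses. -/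
def W (g : Houghton 2) (n : ℕ) : Prop :=
  ∃ l : List (Houghton 2), (∀ x ∈ l, x ∈ S ∨ x⁻¹ ∈ S) ∧ l.length ≤ n ∧ l.prod = g

theorem W_mono {g : Houghton 2} {n n' : ℕ} (h : W g n) (hn : n ≤ n') : W g n' := by
  obtain ⟨l, h1, h2, h3⟩ := h
  exact ⟨l, h1, h2.trans hn, h3⟩

theorem W_one : W 1 0 := ⟨[], by simp, by simp, by simp⟩

theorem W_mul {g h : Houghton 2} {n n' : ℕ} (hg : W g n) (hh : W h n') : W (g * h) (n + n') := by
  obtain ⟨l, h1, h2, h3⟩ := hg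
  obtain ⟨l', h1', h2', h3'⟩ := hh
  refine ⟨l ++ l', ?_, by simp; omega, by simp [h3, h3']⟩
  intro x hx
  rcases List.mem_append.mp hx with h | h
  exacts [h1 x h, h1' x h]

theorem s_mem : s ∈ S := Or.inl ⟨1, by decide, rfl⟩
theorem a_mem : a ∈ S := Or.inr rfl

theorem W_s : W s 1 := ⟨[s], by simpa using Or.inl s_mem, by simp, by simp⟩
theorem W_s_inv : W s⁻¹ 1 := by
  refine ⟨[s⁻¹], ?_, by simp, by simp⟩
  intro x hx
  rw [List.mem_singleton] at hx
  subst hx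
  right
  rw [inv_inv]
  exact s_mem
theorem W_a : W a 1 := ⟨[a], by simpa using Or.inl a_mem, by simp, by simp⟩

theorem W_s_zpow (n : ℤ) : W (s ^ n) n.natAbs := by
  have h1 : ∀ k : ℕ, W (s ^ k) k := by
    intro k
    induction k with
    | zero => simpa using W_one
    | succ k ih => rw [pow_succ]; exact W_mul ih W_s
  have h2 : ∀ k : ℕ, W (s⁻¹ ^ k) k := by
    intro k
    induction k with
    | zero => simpa using W_one
    | succ k ih => rw [pow_succ]; exact W_mul ih W_s_inv
  obtain ⟨k, rfl | rfl⟩ := n.eq_nat_or_neg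
  · simpa using h1 k
  · simpa using h2 k

theorem W_σ (R : ℕ) (i : ℤ) (hi : |i| ≤ R) : W (σ i) (2 * R + 5) := by
  have h := W_mul (W_mul (W_s_zpow (i + 2)) W_a) (W_s_zpow (-(i + 2)))
  rw [zpow_neg] at h
  rw [abs_le] at hi
  exact W_mono h (by omega)

theorem W_list (R : ℕ) (l : List ℤ) (hl : ∀ i ∈ l, |i| ≤ R) :
    W (l.map σ).prod (l.length * (2 * R + 5)) := by
  induction l with
  | nil => simpa using W_one
  | cons i l ih =>
    rw [List.map_cons, List.prod_cons, List.length_cons]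
    have h := W_mul (W_σ R i (hl i (by simp))) (ih (fun j hj => hl j (by simp [hj])))
    exact W_mono h (by ring_nf; omega)

theorem W_B (R : ℕ) (f : Houghton 2) (hf : f ∈ B R) :
    W f ((2 * R + 1) * (2 * R + 1) * (2 * R + 5)) := by
  obtain ⟨l, h1, h2, rfl⟩ := B_list R f hf
  exact W_mono (W_list R l h1) (Nat.mul_le_mul_right _ h2)

theorem W_A (R : ℕ) (m : ℤ) (g : Houghton 2) (hg : A m R g) :
    W g (m.natAbs + (2 * R + 1) * (2 * R + 1) * (2 * R + 5)) := by
  obtain ⟨f, hf, rfl⟩ := A_decomp hg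
  exact W_mul (W_s_zpow m) (W_B R f hf)

theorem wordLength_le {g : Houghton 2} {n : ℕ} (h : W g n) : wordLength S g ≤ n := by
  obtain ⟨l, h1, h2, h3⟩ := h
  refine le_trans ?_ h2
  unfold wordLength
  exact Nat.sInf_le ⟨l, h1, rfl, h3⟩

theorem wordLength_pos {g : Houghton 2} (hg : g ≠ 1) : 1 ≤ wordLength S g := by
  obtain ⟨m, R, hR, h⟩ := exists_A g
  obtain ⟨R, rfl⟩ := Int.eq_ofNat_of_zero_le hR
  obtain ⟨l, h1, h2, h3⟩ := W_A R m g h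
  have hne : {k | ∃ l : List (Houghton 2), (∀ x ∈ l, x ∈ S ∨ x⁻¹ ∈ S) ∧ l.length = k ∧
    l.prod = g}.Nonempty := ⟨_, l, h1, rfl, h3⟩
  obtain ⟨l', h1', h2', h3'⟩ := Nat.sInf_mem hne
  have : wordLength S g = l'.length := h2'.symm
  rw [this]
  by_contra hc
  have : l' = [] := List.length_eq_zero_iff.mp (by omega)
  subst this
  exact hg h3'.symm

section aut
variable (φ : Houghton 2 ≃* Houghton 2)

theorem phi_σ (i : ℤ) : φ (σ i) = φ s ^ (i + 2) * φ a * (φ s ^ (i + 2))⁻¹ := by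
  simp only [σ, map_mul, map_inv, map_zpow]

theorem phi_a : ∃ R : ℕ, φ a ∈ B R := by
  obtain ⟨m, R, hR, h⟩ := exists_A (φ a)
  have haa : a * a = 1 := by
    apply T_inj
    intro x
    rw [T_mul, T_a]
    simp
  obtain ⟨R', h'⟩ := A_mul h h
  rw [← map_mul, haa, map_one] at h'
  have h1 : A 0 0 (1 : Houghton 2) := fun x _ => by simp
  have hm := A_unique h' h1
  have : m = 0 := by omega
  subst this
  obtain ⟨R, rfl⟩ := Int.eq_ofNat_of_zero_le hR
  exact ⟨R, mem_B_iff.mpr h⟩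

theorem phi_B (R : ℕ) (f : Houghton 2) (hf : f ∈ B R) : ∃ R' : ℤ, A 0 R' (φ f) := by
  obtain ⟨l, -, -, rfl⟩ := B_list R f hf
  clear hf
  obtain ⟨m, Q, hQ, hu⟩ := exists_A (φ s)
  obtain ⟨C, hC⟩ := phi_a φ
  induction l with
  | nil => exact ⟨0, fun x _ => by simp⟩
  | cons i l ih =>
    obtain ⟨R1, h1⟩ := ih
    obtain ⟨R2, h2⟩ := A_zpow hu (i + 2)
    obtain ⟨R3, h3⟩ := A_mul h2 (mem_B_iff.mp hC)
    obtain ⟨R4, h4⟩ := A_mul h3 (A_inv h2)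
    rw [← phi_σ] at h4
    obtain ⟨R5, h5⟩ := A_mul h4 h1
    refine ⟨R5, ?_⟩
    rw [List.map_cons, List.prod_cons, map_mul]
    convert h5 using 1
    ring

theorem phi_s : ∃ e : ℤ, (e = 1 ∨ e = -1) ∧ ∃ R : ℕ, A e R (φ s) := by
  obtain ⟨e, R, hR, h⟩ := exists_A (φ s)
  obtain ⟨R, rfl⟩ := Int.eq_ofNat_of_zero_le hR
  refine ⟨e, ?_, R, h⟩
  obtain ⟨e', R', hR', h'⟩ := exists_A (φ.symm s)
  obtain ⟨R', rfl⟩ := Int.eq_ofNat_of_zero_le hR'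
  obtain ⟨f, hf, hs⟩ := A_decomp h'
  have h1 := congrArg φ hs
  rw [MulEquiv.apply_symm_apply, map_mul, map_zpow] at h1
  obtain ⟨R1, h2⟩ := phi_B φ R' f hf
  obtain ⟨R2, h3⟩ := A_zpow h e'
  obtain ⟨R3, h4⟩ := A_mul h3 h2
  rw [← h1] at h4
  have h5 : A 1 0 s := fun x _ => T_s x
  have h6 := A_unique h4 h5
  rw [add_zero] at h6
  rw [mul_comm] at h6
  exact (Int.mul_eq_one_iff_eq_one_or_neg_one.mp h6).imp And.left And.left

/-- conjugation moves the support by one step. -/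
theorem conj_step {e : ℤ} (he : e = 1 ∨ e = -1) {D r : ℤ} {u : Houghton 2} (hu : A e D u)
    (hr : D ≤ r) {f : Houghton 2} (hf : f ∈ B r) :
    u * f * u⁻¹ ∈ B (r + 1) ∧ u⁻¹ * f * u ∈ B (r + 1) := by
  obtain ⟨f0, hf0, hu0⟩ := A_decomp hu
  have hf0r := B_mono hr hf0
  have h1 : ∀ x : ℤ, |x| ≤ r → |T u x| ≤ r + 1 := by
    intro x hx
    rw [hu0, T_mul, T_s_zpow]
    have := B_le hf0r hx
    rw [abs_le] at *
    omega
  have h2 : ∀ x : ℤ, |x| ≤ r → |T u⁻¹ x| ≤ r + 1 := by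
    intro x hx
    rw [hu0, mul_inv_rev, T_mul, ← zpow_neg, T_s_zpow]
    apply B_le (inv_mem (B_mono (by omega) hf0r))
    rw [abs_le] at *
    omega
  constructor
  · intro x hx
    rw [T_mul, T_mul, hf, T_self_inv]
    by_contra hc
    have := h1 (T u⁻¹ x) (by omega)
    rw [T_self_inv] at this
    omega
  · intro x hx
    rw [T_mul, T_mul, hf, T_inv_self]
    by_contra hc
    have := h2 (T u x) (by omega)
    rw [T_inv_self] at this
    omega

theorem conj_zpow {e : ℤ} (he : e = 1 ∨ e = -1) {D r : ℤ} {u : Houghton 2} (hu : A e D u)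
    (hr : D ≤ r) {f : Houghton 2} (hf : f ∈ B r) (n : ℤ) :
    u ^ n * f * (u ^ n)⁻¹ ∈ B (r + |n|) := by
  have h1 : ∀ k : ℕ, u ^ k * f * (u ^ k)⁻¹ ∈ B (r + k) := by
    intro k
    induction k with
    | zero => simpa using hf
    | succ k ih =>
      have := (conj_step he hu (by omega) ih).1
      rw [pow_succ']
      convert this using 1
      · push_cast; ring_nf
      · group
  have h2 : ∀ k : ℕ, u⁻¹ ^ k * f * (u⁻¹ ^ k)⁻¹ ∈ B (r + k) := by
    intro k
    induction k with
    | zero => simpa using hf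
    | succ k ih =>
      have := (conj_step he hu (by omega) ih).2
      rw [pow_succ']
      convert this using 1
      · push_cast; ring_nf
      · rw [mul_inv_rev, inv_inv]; simp only [mul_assoc]
  obtain ⟨k, rfl | rfl⟩ := n.eq_nat_or_neg
  · simpa using h1 k
  · simpa using h2 k

theorem phi_B' : ∃ C : ℕ, ∀ (R : ℕ) (f : Houghton 2), f ∈ B R → φ f ∈ B ((R + C : ℕ) : ℤ) := by
  obtain ⟨e, he, D, hu⟩ := phi_s φ
  obtain ⟨C, hC⟩ := phi_a φ
  refine ⟨C + D + 2, fun R f hf => ?_⟩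
  obtain ⟨l, h1, -, rfl⟩ := B_list R f hf
  clear hf
  rw [map_list_prod]
  apply Subgroup.list_prod_mem
  intro y hy
  rw [List.map_map, List.mem_map] at hy
  obtain ⟨i, hi, rfl⟩ := hy
  have hi := h1 i hi
  simp only [Function.comp]
  rw [phi_σ]
  refine B_mono ?_ (conj_zpow he hu (r := C + D) (by omega) (B_mono (by omega) hC) (i + 2))
  have := abs_add_le i 2
  rw [abs_two] at this
  push_cast
  omega

theorem phi_A (m : ℤ) : ∃ Q : ℕ, ∀ (m' : ℤ) (R : ℕ) (g : Houghton 2), (m' = m ∨ m' = -m) →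
    A m' R g → ∃ m'' : ℤ, (m'' = m ∨ m'' = -m) ∧ A m'' ((R + Q : ℕ) : ℤ) (φ g) := by
  obtain ⟨C, hC⟩ := phi_B' φ
  obtain ⟨e, he, D, hu⟩ := phi_s φ
  obtain ⟨R1, h1⟩ := A_zpow hu m
  obtain ⟨R2, h2⟩ := A_zpow hu (-m)
  refine ⟨C + R1.toNat + R2.toNat, fun m' R g hm' hg => ⟨m' * e, ?_, ?_⟩⟩
  · rcases he with rfl | rfl <;> rcases hm' with rfl | rfl <;> simp
  · obtain ⟨f, hf, rfl⟩ := A_decomp hg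
    intro x hx
    rw [map_mul, map_zpow, T_mul, hC R f hf x (by push_cast at *; omega)]
    rcases hm' with rfl | rfl
    · exact h1 x (by push_cast at *; omega)
    · exact h2 x (by push_cast at *; omega)

theorem phi_iter (g : Houghton 2) : ∃ M R Q : ℕ, ∀ k : ℕ,
    W ((⇑φ.toMonoidHom)^[k] g)
      (M + (2 * (R + k * Q) + 1) * (2 * (R + k * Q) + 1) * (2 * (R + k * Q) + 5)) := by
  obtain ⟨m, R, hR, hg⟩ := exists_A g
  obtain ⟨R, rfl⟩ := Int.eq_ofNat_of_zero_le hR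
  obtain ⟨Q, hQ⟩ := phi_A φ m
  have key : ∀ k : ℕ, ∃ m' : ℤ, (m' = m ∨ m' = -m) ∧
      A m' ((R + k * Q : ℕ) : ℤ) ((⇑φ.toMonoidHom)^[k] g) := by
    intro k
    induction k with
    | zero => exact ⟨m, Or.inl rfl, by simpa using hg⟩
    | succ k ih =>
      obtain ⟨m', hm', h⟩ := ih
      obtain ⟨m'', hm'', h'⟩ := hQ _ _ _ hm' h
      refine ⟨m'', hm'', ?_⟩
      rw [Function.iterate_succ_apply']
      rw [show R + (k + 1) * Q = R + k * Q + Q by ring]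
      exact h'
  refine ⟨m.natAbs, R, Q, fun k => ?_⟩
  obtain ⟨m', hm', h⟩ := key k
  exact W_mono (W_A _ _ _ h) (by omega)

theorem phi_poly (g : Houghton 2) : ∃ C : ℕ, 0 < C ∧ ∀ k : ℕ, 1 ≤ k →
    wordLength S ((⇑φ.toMonoidHom)^[k] g) ≤ C * k ^ 3 := by
  obtain ⟨M, R, Q, h⟩ := phi_iter φ g
  refine ⟨M + (2 * (R + Q) + 1) * (2 * (R + Q) + 1) * (2 * (R + Q) + 5), by positivity,
    fun k hk => (wordLength_le (h k)).trans ?_⟩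
  have h1 : 2 * (R + k * Q) + 1 ≤ (2 * (R + Q) + 1) * k := by nlinarith
  have h2 : 2 * (R + k * Q) + 5 ≤ (2 * (R + Q) + 5) * k := by nlinarith
  have h3 : M ≤ M * k ^ 3 := Nat.le_mul_of_pos_right _ (by positivity)
  calc _ ≤ M * k ^ 3 + ((2 * (R + Q) + 1) * k) * ((2 * (R + Q) + 1) * k) *
        ((2 * (R + Q) + 5) * k) := by gcongr
    _ = _ := by ring

theorem root_tendsto (C : ℕ) (hC : 0 < C) :
    Filter.Tendsto (fun k : ℕ => ((C : ℝ) * (k : ℝ) ^ 3) ^ (1 / (k : ℝ))) Filter.atTop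
      (nhds 1) := by
  have h1 : Filter.Tendsto (fun k : ℕ => (k : ℝ) ^ (1 / (k : ℝ))) Filter.atTop (nhds 1) :=
    tendsto_rpow_div.comp tendsto_natCast_atTop_atTop
  have h2 : Filter.Tendsto (fun k : ℕ => (C : ℝ) ^ (1 / (k : ℝ))) Filter.atTop (nhds 1) := by
    have h0 : Filter.Tendsto (fun k : ℕ => 1 / (k : ℝ)) Filter.atTop (nhds 0) :=
      tendsto_one_div_atTop_nhds_zero_nat
    have hC' : (C : ℝ) ≠ 0 := by positivity
    have := (Real.continuousAt_const_rpow (b := 0) hC').tendsto.comp h0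
    simpa [Function.comp_def] using this
  have h3 := h2.mul (h1.pow 3)
  rw [one_pow, mul_one] at h3
  refine h3.congr fun k => ?_
  rw [Real.mul_rpow (by positivity) (by positivity), ← Real.rpow_natCast,
    ← Real.rpow_natCast, ← Real.rpow_mul (by positivity), ← Real.rpow_mul (by positivity),
    mul_comm (1 / (k : ℝ))]

theorem limsup_ne_one (g : Houghton 2) (hg : g ≠ 1) :
    Filter.limsup (fun k : ℕ => (wordLength S ((⇑φ.toMonoidHom)^[k] g) : ℝ) ^ (1 / (k : ℝ)))
      Filter.atTop = 1 := by
  obtain ⟨C, hC, h⟩ := phi_poly φ g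
  have hne : ∀ k : ℕ, (⇑φ.toMonoidHom)^[k] g ≠ 1 := by
    intro k
    induction k with
    | zero => exact hg
    | succ k ih =>
      rw [Function.iterate_succ_apply']
      intro hc
      exact ih (φ.injective (hc.trans (map_one φ).symm))
  apply Filter.Tendsto.limsup_eq
  refine tendsto_of_tendsto_of_tendsto_of_le_of_le' tendsto_const_nhds (root_tendsto C hC) ?_ ?_
  · filter_upwards with k
    apply Real.one_le_rpow
    · exact_mod_cast wordLength_pos (hne k)
    · positivity
  · filter_upwards [Filter.eventually_ge_atTop 1] with k hk
    apply Real.rpow_le_rpow (by positivity)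
    · exact_mod_cast h k hk
    · positivity

theorem limsup_one :
    Filter.limsup (fun k : ℕ => (wordLength S ((⇑φ.toMonoidHom)^[k] 1) : ℝ) ^ (1 / (k : ℝ)))
      Filter.atTop = 0 := by
  apply Filter.Tendsto.limsup_eq
  refine tendsto_const_nhds.congr' ?_
  filter_upwards [Filter.eventually_ge_atTop 1] with k hk
  have h1 : (⇑φ.toMonoidHom)^[k] 1 = 1 := Function.iterate_fixed (map_one _) k
  have h2 : wordLength S (1 : Houghton 2) = 0 := Nat.le_zero.mp (wordLength_le W_one)
  rw [h1, h2, Nat.cast_zero, Real.zero_rpow]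
  have : (k : ℝ) ≠ 0 := by positivity
  positivity

theorem main : growthRate S φ.toMonoidHom = 1 := by
  unfold growthRate
  have hle : ∀ g : Houghton 2, Filter.limsup (fun k : ℕ =>
      (wordLength S ((⇑φ.toMonoidHom)^[k] g) : ℝ) ^ (1 / (k : ℝ))) Filter.atTop ≤ 1 := by
    intro g
    by_cases hg : g = 1
    · subst hg; rw [limsup_one]; norm_num
    · rw [limsup_ne_one φ g hg]
  have hs : s ≠ 1 := by
    intro h
    have := T_s 0
    rw [h] at this
    simp at this
  apply le_antisymm (ciSup_le hle)
  refine (limsup_ne_one φ s hs).symm.le.trans ?_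
  exact le_ciSup (f := fun g : Houghton 2 => Filter.limsup (fun k : ℕ =>
      (wordLength S ((⇑φ.toMonoidHom)^[k] g) : ℝ) ^ (1 / (k : ℝ))) Filter.atTop)
    ⟨1, by rintro _ ⟨g, rfl⟩; exact hle g⟩ s

end aut
end H2

/-- For every automorphism `φ` of Houghton's group `H_2`, the
growth rate `GR(φ)` (w.r.t. the generating set `{g_2, α}`) equals `1`. -/
theorem growthRate_automorphism_H2_eq_one
    (φ : Houghton 2 ≃* Houghton 2) :
    growthRate
      (houghtonGensOnly 2 (by omega) ∪ {hAlpha 2 (by omega)}) φ.toMonoidHom = 1 := by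
  exact H2.main φ
end
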